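/- arXiv:2311.04520 — 2 statements merged into one kernel-verified Lean document; each statement's English description precedes it below -/
import Mathlib

section
/- Let g : ℝ^d × ℝ^p → ℝ be differentiable with ∇_x g and ∇_y g each L_g-Lipschitz in each variable, and suppose that for every x: g(x,·) attains its minimum G(x) at y*(x), the μ-PL condition ‖∇_y g(x, y)‖² ≥ 2μ (g(x, y) − G(x)) and the quadratic growth condition g(x, y) − G(x) ≥ (μ/2) ‖y − y*(x)‖² hold for all y (μ > 0 with μ ≤ L_g), G is differentiable with ∇G(x) = ∇_x g(x, y*(x)), and ∇G is L_G-Lipschitz with L_G ≥ max{L_g, L_g²/(2μ)}. Let (x_t, y_t, v_t, B_t) satisfy y_{t+1} = y_t − λ B_t^{-1} v_t where B_t ∈ ℝ^{p×p} is symmetric with ρ_l I_p ⪯ B_t ⪯ ρ_u I_p, ρ_l ρ_u ≥ 1, 0 < ρ_l ≤ 1, and x_{t+1} ∈ ℝ^d is arbitrary. If 0 < γ ≤ min{ λμρ_l/(16 L_G ρ_u), μρ_l/(16 L_g² ρ_u) } and 0 < λ ≤ 1/(2 L_g ρ_u), then g(x_{t+1}, y_{t+1}) − G(x_{t+1}) ≤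 (1 − λμ/(2ρ_u)) (g(x_t, y_t) − G(x_t)) + (ρ_l/(8γ)) ‖x_{t+1} − x_t‖² − (1/(4λρ_u)) ‖y_{t+1} − y_t‖² + (λ/ρ_l) ‖∇_y g(x_t, y_t) − v_t‖². -/
open scoped RealInnerProductSpace

/-!
The argument is a decrease in `y` at fixed `x`, followed by a drift in `x` at fixed `y`.

*Decrease.* Put `z = λ⁻¹ (y_t - y_{t+1})`, so that `B z = v`. The quantity
`2 ⟪∇_y g, z⟫ - ⟪B z, z⟫` would be at least `‖∇_y g‖² / ρ_u` if `v` were exact; the error in `v`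
costs at most `‖∇_y g - v‖² / ρ_l`. With the descent lemma and the PL condition this contracts the
residual `g - G` by the factor `1 - u`, where `u = λμ/ρ_u`.

*Drift.* The map `x ↦ g(x, y) - G(x)` is `(L_g + L_G)`-smooth, and by quadratic growth its squared
gradient norm `‖∇_x g(x, y) - ∇_x g(x, y*(x))‖²` is at most `2 L_g² / μ` times its value. Young's
inequality with weight `ε` then bounds the change in `x` by `ε` times the residual plus a multiple
of `‖x_{t+1} - x_t‖²`. The choice `ε = u / (2 (1 - u))` is the one for which
`(1 + ε) (1 - u) = 1 - u / 2`.
-/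

section DescentLemma

theorem le_add_fderiv_add_norm_sq_of_lipschitz {E : Type*} [NormedAddCommGroup E]
    [NormedSpace ℝ E] {f : E → ℝ} {f' : E → E →L[ℝ] ℝ} {L : ℝ} {a : E}
    (hf : ∀ x, HasFDerivAt f (f' x) x) (hL : ∀ x, ‖f' x - f' a‖ ≤ L * ‖x - a‖) (b : E) :
    f b ≤ f a + f' a (b - a) + L / 2 * ‖b - a‖ ^ 2 := by
  have hasDerivAt_gap (t : ℝ) : HasDerivAt
      (fun t : ℝ => f (a + t • (b - a)) - t * f' a (b - a) - t ^ 2 * (L / 2 * ‖b - a‖ ^ 2))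
      ((f' (a + t • (b - a)) - f' a) (b - a) - t * (L * ‖b - a‖ ^ 2)) t := by
    have hline : HasDerivAt (fun t : ℝ => a + t • (b - a)) (b - a) t := by
      simpa using ((hasDerivAt_id t).smul_const (b - a)).const_add a
    refine ((((hf _).comp_hasDerivAt t hline).sub ((hasDerivAt_id t).mul_const _)).sub
      ((hasDerivAt_pow 2 t).mul_const _)).congr_deriv ?_
    simp only [sub_apply, Nat.cast_ofNat, one_mul]
    ring
  have deriv_gap_nonpos {t : ℝ} (ht : 0 ≤ t) :
      (f' (a + t • (b - a)) - f' a) (b - a) - t * (L * ‖b - a‖ ^ 2) ≤ 0 := by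
    rw [sub_nonpos]
    calc (f' (a + t • (b - a)) - f' a) (b - a)
        ≤ ‖f' (a + t • (b - a)) - f' a‖ * ‖b - a‖ :=
          (Real.le_norm_self _).trans (ContinuousLinearMap.le_opNorm _ _)
      _ ≤ L * ‖a + t • (b - a) - a‖ * ‖b - a‖ := by gcongr; exact hL _
      _ = t * (L * ‖b - a‖ ^ 2) := by
          rw [add_sub_cancel_left, norm_smul, Real.norm_of_nonneg ht]; ring
  have antitone_gap := antitoneOn_of_deriv_nonpos (convex_Icc (0 : ℝ) 1)
    (fun t _ => (hasDerivAt_gap t).continuousAt.continuousWithinAt)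
    (fun t _ => (hasDerivAt_gap t).differentiableAt.differentiableWithinAt)
    (fun t ht => (hasDerivAt_gap t).deriv.trans_le (deriv_gap_nonpos (interior_subset ht).1))
  have gap_one_le_gap_zero :=
    antitone_gap (Set.left_mem_Icc.2 zero_le_one) (Set.right_mem_Icc.2 zero_le_one) zero_le_one
  simp only [one_smul, add_sub_cancel, one_mul, one_pow, zero_smul, add_zero, zero_mul, sub_zero,
    ne_eq, OfNat.ofNat_ne_zero, not_false_eq_true, zero_pow] at gap_one_le_gap_zero
  linarith

variable {E : Type*} [NormedAddCommGroup E] [InnerProductSpace ℝ E] [CompleteSpace E]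
  {f : E → ℝ} {f' : E → E} {L : ℝ} {a : E}

theorem le_add_inner_add_norm_sq_of_lipschitz (hf : ∀ x, HasGradientAt f (f' x) x)
    (hL : ∀ x, ‖f' x - f' a‖ ≤ L * ‖x - a‖) (b : E) :
    f b ≤ f a + ⟪f' a, b - a⟫ + L / 2 * ‖b - a‖ ^ 2 := by
  refine le_add_fderiv_add_norm_sq_of_lipschitz (fun x => (hf x).hasFDerivAt) (fun x => ?_) b
  rw [← map_sub, LinearIsometryEquiv.norm_map]
  exact hL x

theorem le_one_add_mul_add_norm_sq_of_lipschitz {c ε : ℝ} (hf : ∀ x, HasGradientAt f (f' x) x)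
    (hL : ∀ x, ‖f' x - f' a‖ ≤ L * ‖x - a‖) (hc : 0 < c) (hε : 0 < ε)
    (hgrad : ‖f' a‖ ^ 2 ≤ 2 * c * f a) (b : E) :
    f b ≤ (1 + ε) * f a + (c / (2 * ε) + L / 2) * ‖b - a‖ ^ 2 := by
  have young : ⟪f' a, b - a⟫ ≤ ε * f a + c / (2 * ε) * ‖b - a‖ ^ 2 :=
    calc ⟪f' a, b - a⟫ ≤ ‖f' a‖ * ‖b - a‖ := real_inner_le_norm _ _
      _ ≤ (ε / c * ‖f' a‖ ^ 2 + (ε / c)⁻¹ * ‖b - a‖ ^ 2) / 2 := by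
        linarith [two_mul_le_add_mul_sq (a := ‖f' a‖) (b := ‖b - a‖) (div_pos hε hc)]
      _ ≤ (ε / c * (2 * c * f a) + (ε / c)⁻¹ * ‖b - a‖ ^ 2) / 2 := by gcongr
      _ = ε * f a + c / (2 * ε) * ‖b - a‖ ^ 2 := by field_simp
  linarith [le_add_inner_add_norm_sq_of_lipschitz hf hL b]

end DescentLemma

section PreconditionedStep

variable {E : Type*} [NormedAddCommGroup E] [InnerProductSpace ℝ E] {B : E →ₗ[ℝ] E} {ρl ρu : ℝ}

theorem inner_map_self_add_two_mul_inner_add_nonneg (hBl : ∀ w, ρl * ‖w‖ ^ 2 ≤ ⟪B w, w⟫)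
    (hρl : 0 < ρl) (e w : E) : 0 ≤ ⟪B w, w⟫ + 2 * ⟪e, w⟫ + ‖e‖ ^ 2 / ρl :=
  calc 0 ≤ ‖e + ρl • w‖ ^ 2 / ρl := by positivity
    _ = ρl * ‖w‖ ^ 2 + 2 * ⟪e, w⟫ + ‖e‖ ^ 2 / ρl := by
      rw [norm_add_sq_real, real_inner_smul_right, norm_smul, Real.norm_of_nonneg hρl.le]
      field_simp
      ring
    _ ≤ ⟪B w, w⟫ + 2 * ⟪e, w⟫ + ‖e‖ ^ 2 / ρl := by gcongr; exact hBl w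

theorem norm_sq_div_sub_le_two_mul_inner_sub (hB : B.IsSymmetric)
    (hBl : ∀ w, ρl * ‖w‖ ^ 2 ≤ ⟪B w, w⟫) (hBu : ∀ w, ⟪B w, w⟫ ≤ ρu * ‖w‖ ^ 2)
    (hρl : 0 < ρl) (hρu : 0 < ρu) (q z : E) :
    ‖q‖ ^ 2 / ρu - ‖q - B z‖ ^ 2 / ρl ≤ 2 * ⟪q, z⟫ - ⟪B z, z⟫ := by
  -- `q / ρu` replaces the maximizer `B⁻¹ q` of the right-hand side, so `B` need not be inverted.
  obtain ⟨h, hh⟩ : ∃ h, h = ρu⁻¹ • q := ⟨_, rfl⟩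
  have lower : 0 ≤ ⟪B (z - h), z - h⟫ + 2 * ⟪q - B z, z - h⟫ + ‖q - B z‖ ^ 2 / ρl :=
    inner_map_self_add_two_mul_inner_add_nonneg hBl hρl _ _
  have upper : ‖q‖ ^ 2 / ρu ≤ 2 * ⟪q, h⟫ - ⟪B h, h⟫ :=
    calc ‖q‖ ^ 2 / ρu = 2 * ⟪q, h⟫ - ρu * ‖h‖ ^ 2 := by
          rw [hh, real_inner_smul_right, real_inner_self_eq_norm_sq, norm_smul,
            Real.norm_of_nonneg (inv_nonneg.2 hρu.le)]
          field_simp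
          ring
      _ ≤ 2 * ⟪q, h⟫ - ⟪B h, h⟫ := by gcongr; exact hBu h
  have cross : ⟪B h, z⟫ = ⟪B z, h⟫ := (hB h z).trans (real_inner_comm _ _)
  simp only [map_sub, inner_sub_left, inner_sub_right, cross] at lower
  linarith

variable [CompleteSpace E] {f : E → ℝ} {f' : E → E} {L lam : ℝ} {y y' v : E}

theorem le_sub_of_preconditioned_step (hf : ∀ x, HasGradientAt f (f' x) x)
    (hL : ∀ x, ‖f' x - f' y‖ ≤ L * ‖x - y‖) (hB : B.IsSymmetric)
    (hBl : ∀ w, ρl * ‖w‖ ^ 2 ≤ ⟪B w, w⟫) (hBu : ∀ w, ⟪B w, w⟫ ≤ ρu * ‖w‖ ^ 2)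
    (hρl : 0 < ρl) (hρu : 0 < ρu) (hρlu : 1 ≤ ρl * ρu) (hlam : 0 < lam)
    (hlamL : lam * (2 * L * ρu) ≤ 1) (hstep : B (y - y') = lam • v) :
    f y' ≤ f y - lam / (2 * ρu) * ‖f' y‖ ^ 2 - 1 / (4 * lam * ρu) * ‖y' - y‖ ^ 2
      + lam / (2 * ρl) * ‖f' y - v‖ ^ 2 := by
  have descent : f y' ≤ f y - ⟪f' y, y - y'⟫ + L / 2 * ‖y' - y‖ ^ 2 := by
    simpa only [← neg_sub y y', inner_neg_right, ← sub_eq_add_neg, norm_neg]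
      using le_add_inner_add_norm_sq_of_lipschitz hf hL y'
  have model_decrease : lam / (2 * ρu) * ‖f' y‖ ^ 2 - lam / (2 * ρl) * ‖f' y - v‖ ^ 2
      ≤ ⟪f' y, y - y'⟫ - ⟪v, y - y'⟫ / 2 := by
    have hBz : B (lam⁻¹ • (y - y')) = v := by rw [map_smul, hstep, inv_smul_smul₀ hlam.ne']
    have h := norm_sq_div_sub_le_two_mul_inner_sub hB hBl hBu hρl hρu (f' y) (lam⁻¹ • (y - y'))
    rw [hBz, real_inner_smul_right, real_inner_smul_right] at h
    calc _ = lam / 2 * (‖f' y‖ ^ 2 / ρu - ‖f' y - v‖ ^ 2 / ρl) := by ring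
      _ ≤ lam / 2 * (2 * (lam⁻¹ * ⟪f' y, y - y'⟫) - lam⁻¹ * ⟪v, y - y'⟫) := by gcongr
      _ = ⟪f' y, y - y'⟫ - ⟪v, y - y'⟫ / 2 := by field_simp
  have curvature : 1 / (lam * ρu) * ‖y' - y‖ ^ 2 ≤ ⟪v, y - y'⟫ :=
    calc 1 / (lam * ρu) * ‖y' - y‖ ^ 2 = lam⁻¹ * (1 / ρu * ‖y - y'‖ ^ 2) := by
          rw [norm_sub_rev]; field_simp
      _ ≤ lam⁻¹ * (ρl * ‖y - y'‖ ^ 2) := by gcongr; rwa [div_le_iff₀ hρu]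
      _ ≤ lam⁻¹ * ⟪B (y - y'), y - y'⟫ := by gcongr; exact hBl _
      _ = ⟪v, y - y'⟫ := by rw [hstep, real_inner_smul_left, inv_mul_cancel_left₀ hlam.ne']
  have smoothness : L / 2 * ‖y' - y‖ ^ 2 ≤ 1 / (4 * lam * ρu) * ‖y' - y‖ ^ 2 := by
    refine mul_le_mul_of_nonneg_right ?_ (sq_nonneg _)
    rw [le_div_iff₀ (by positivity)]
    linarith
  have split : 1 / (lam * ρu) * ‖y' - y‖ ^ 2 / 2 = 2 * (1 / (4 * lam * ρu) * ‖y' - y‖ ^ 2) := by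
    field_simp
    norm_num
  linarith

theorem sub_le_one_sub_mul_sub_of_preconditioned_step_of_pl {μ m : ℝ}
    (hf : ∀ x, HasGradientAt f (f' x) x)
    (hL : ∀ x, ‖f' x - f' y‖ ≤ L * ‖x - y‖) (hPL : 2 * μ * (f y - m) ≤ ‖f' y‖ ^ 2)
    (hB : B.IsSymmetric) (hBl : ∀ w, ρl * ‖w‖ ^ 2 ≤ ⟪B w, w⟫)
    (hBu : ∀ w, ⟪B w, w⟫ ≤ ρu * ‖w‖ ^ 2) (hρl : 0 < ρl) (hρu : 0 < ρu) (hρlu : 1 ≤ ρl * ρu)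
    (hlam : 0 < lam) (hlamL : lam * (2 * L * ρu) ≤ 1) (hstep : B (y - y') = lam • v) :
    f y' - m ≤ (1 - lam * μ / ρu) * (f y - m) - 1 / (4 * lam * ρu) * ‖y' - y‖ ^ 2
      + lam / (2 * ρl) * ‖f' y - v‖ ^ 2 := by
  have pl_decrease : lam * μ / ρu * (f y - m) ≤ lam / (2 * ρu) * ‖f' y‖ ^ 2 :=
    calc lam * μ / ρu * (f y - m) = lam / (2 * ρu) * (2 * μ * (f y - m)) := by field_simp
      _ ≤ lam / (2 * ρu) * ‖f' y‖ ^ 2 := by gcongr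
  linarith [le_sub_of_preconditioned_step hf hL hB hBl hBu hρl hρu hρlu hlam hlamL hstep]

end PreconditionedStep

section Residual

variable {X Y : Type*} [NormedAddCommGroup X] [InnerProductSpace ℝ X] [CompleteSpace X]
  [NormedAddCommGroup Y] {g : X → Y → ℝ} {gx : X → Y → X} {ystar : X → Y} {μ Lg LG : ℝ}

theorem residual_le_one_add_mul_residual_add_norm_sq {ε : ℝ} (hμ : 0 < μ) (hLg : 0 < Lg)
    (hε : 0 < ε)
    (hgx : ∀ x y, HasGradientAt (fun x' => g x' y) (gx x y) x)
    (hgxlipy : ∀ x y₁ y₂, ‖gx x y₁ - gx x y₂‖ ≤ Lg * ‖y₁ - y₂‖)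
    (hgxlipx : ∀ x₁ x₂ y, ‖gx x₁ y - gx x₂ y‖ ≤ Lg * ‖x₁ - x₂‖)
    (hQG : ∀ x y, μ / 2 * ‖y - ystar x‖ ^ 2 ≤ g x y - g x (ystar x))
    (hGgrad : ∀ x, HasGradientAt (fun x' => g x' (ystar x')) (gx x (ystar x)) x)
    (hGlip : ∀ x₁ x₂, ‖gx x₁ (ystar x₁) - gx x₂ (ystar x₂)‖ ≤ LG * ‖x₁ - x₂‖)
    (x x' : X) (y : Y) :
    g x' y - g x' (ystar x') ≤ (1 + ε) * (g x y - g x (ystar x))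
      + (Lg ^ 2 / μ / (2 * ε) + (Lg + LG) / 2) * ‖x' - x‖ ^ 2 := by
  refine le_one_add_mul_add_norm_sq_of_lipschitz (f := fun z => g z y - g z (ystar z))
    (f' := fun z => gx z y - gx z (ystar z)) (fun z => ?_) (fun z => ?_) (by positivity) hε ?_ x'
  · rw [hasGradientAt_iff_hasFDerivAt, map_sub]
    exact (hgx z y).hasFDerivAt.sub (hGgrad z).hasFDerivAt
  · calc ‖gx z y - gx z (ystar z) - (gx x y - gx x (ystar x))‖
        = ‖gx z y - gx x y - (gx z (ystar z) - gx x (ystar x))‖ := by rw [sub_sub_sub_comm]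
      _ ≤ ‖gx z y - gx x y‖ + ‖gx z (ystar z) - gx x (ystar x)‖ := norm_sub_le _ _
      _ ≤ (Lg + LG) * ‖z - x‖ := by linarith [hgxlipx z x y, hGlip z x]
  · calc ‖gx x y - gx x (ystar x)‖ ^ 2 ≤ (Lg * ‖y - ystar x‖) ^ 2 := by
          gcongr; exact hgxlipy _ _ _
      _ = 2 * (Lg ^ 2 / μ) * (μ / 2 * ‖y - ystar x‖ ^ 2) := by field_simp
      _ ≤ 2 * (Lg ^ 2 / μ) * (g x y - g x (ystar x)) := by gcongr; exact hQG x y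

end Residual

section StepSizes

theorem rate_le_half {μ Lg lam ρu : ℝ} (hμLg : μ ≤ Lg) (hlam : 0 < lam) (hρu : 1 ≤ ρu)
    (hlamL : lam * (2 * Lg * ρu) ≤ 1) : lam * μ / ρu ≤ 1 / 2 :=
  calc lam * μ / ρu ≤ lam * Lg / ρu := by gcongr
    _ = lam * (2 * Lg * ρu) / (2 * ρu ^ 2) := by field_simp
    _ ≤ 1 / (2 * 1 ^ 2) := by gcongr
    _ = 1 / 2 := by norm_num

theorem drift_coefficient_le {μ Lg LG u ρ γ : ℝ} (hμ : 0 < μ) (hμLg : μ ≤ Lg)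
    (hLG : Lg ^ 2 / (2 * μ) ≤ LG) (hu : 0 < u) (hu1 : u < 1) (hγ : 0 < γ)
    (hγLG : γ * (16 * LG) ≤ u * ρ) :
    Lg ^ 2 / μ / (2 * (u / (2 * (1 - u)))) + (Lg + LG) / 2 ≤ ρ / (8 * γ) := by
  have h1u : 0 < 1 - u := sub_pos.2 hu1
  have hcond : Lg ^ 2 / μ ≤ 2 * LG := by
    rw [div_le_iff₀ (by positivity)] at hLG ⊢
    linarith
  have hLgLG : Lg ≤ 2 * LG := by
    refine le_trans ?_ hcond
    rw [le_div_iff₀ hμ, sq]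
    gcongr
    exact hμ.le.trans hμLg
  -- The weight `ε = u / (2 (1 - u))` has `1 / ε = 2 / u - 2`; the `-2` absorbs `(Lg + LG) / 2`.
  calc Lg ^ 2 / μ / (2 * (u / (2 * (1 - u)))) + (Lg + LG) / 2
      ≤ 2 * LG / (2 * (u / (2 * (1 - u)))) + 2 * LG := by gcongr; linarith
    _ = 2 * LG / u := by field_simp; ring
    _ ≤ ρ / (8 * γ) := by rw [div_le_div_iff₀ hu (by positivity)]; linarith

theorem le_one_sub_half_mul_of_decrease_of_drift {u a b r S E T : ℝ} (hu : 0 < u)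
    (hu2 : u ≤ 1 / 2) (hS : 0 ≤ S) (hE : 0 ≤ E) (hdecrease : b ≤ (1 - u) * a - S + E)
    (hdrift : r ≤ (1 + u / (2 * (1 - u))) * b + T) :
    r ≤ (1 - u / 2) * a - S + 2 * E + T := by
  obtain ⟨ε, hε⟩ : ∃ ε, ε = u / (2 * (1 - u)) := ⟨_, rfl⟩
  have h1u : 0 < 1 - u := by linarith
  have hε0 : 0 ≤ ε := hε ▸ by positivity
  have hε1 : ε ≤ 1 := by rw [hε, div_le_one (by positivity)]; linarith
  have hrate : (1 + ε) * (1 - u) = 1 - u / 2 := by rw [hε]; field_simp; ring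
  rw [← hε] at hdrift
  calc r ≤ (1 + ε) * b + T := hdrift
    _ ≤ (1 + ε) * ((1 - u) * a - S + E) + T := by gcongr
    _ = (1 + ε) * (1 - u) * a - S + 2 * E + T - ε * S - (1 - ε) * E := by ring
    _ ≤ (1 - u / 2) * a - S + 2 * E + T := by
      rw [hrate]
      linarith [mul_nonneg hε0 hS, mul_nonneg (sub_nonneg.2 hε1) hE]

end StepSizes

theorem stmt_12_general {X Y : Type*} [NormedAddCommGroup X] [InnerProductSpace ℝ X]
    [CompleteSpace X] [NormedAddCommGroup Y] [InnerProductSpace ℝ Y] [CompleteSpace Y]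
    {μ Lg LG lam γ ρl ρu : ℝ} (hμ : 0 < μ) (hμLg : μ ≤ Lg) (hLG : Lg ^ 2 / (2 * μ) ≤ LG)
    {g : X → Y → ℝ} {gx : X → Y → X} {gy : X → Y → Y} {ystar : X → Y}
    (hgx : ∀ x y, HasGradientAt (fun x' => g x' y) (gx x y) x)
    (hgy : ∀ x y, HasGradientAt (fun y' => g x y') (gy x y) y)
    (hgxlipy : ∀ x y₁ y₂, ‖gx x y₁ - gx x y₂‖ ≤ Lg * ‖y₁ - y₂‖)
    (hgxlipx : ∀ x₁ x₂ y, ‖gx x₁ y - gx x₂ y‖ ≤ Lg * ‖x₁ - x₂‖)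
    (hgylipy : ∀ x y₁ y₂, ‖gy x y₁ - gy x y₂‖ ≤ Lg * ‖y₁ - y₂‖)
    (hPL : ∀ x y, 2 * μ * (g x y - g x (ystar x)) ≤ ‖gy x y‖ ^ 2)
    (hQG : ∀ x y, μ / 2 * ‖y - ystar x‖ ^ 2 ≤ g x y - g x (ystar x))
    (hGgrad : ∀ x, HasGradientAt (fun x' => g x' (ystar x')) (gx x (ystar x)) x)
    (hGlip : ∀ x₁ x₂, ‖gx x₁ (ystar x₁) - gx x₂ (ystar x₂)‖ ≤ LG * ‖x₁ - x₂‖)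
    {x x' : X} {y y' v : Y} {B : Y →ₗ[ℝ] Y} (hB : B.IsSymmetric)
    (hBl : ∀ w, ρl * ‖w‖ ^ 2 ≤ ⟪B w, w⟫) (hBu : ∀ w, ⟪B w, w⟫ ≤ ρu * ‖w‖ ^ 2)
    (hρl : 0 < ρl) (hρ : ρl ≤ ρu) (hρlu : 1 ≤ ρl * ρu) (hstep : B (y - y') = lam • v)
    (hγ : 0 < γ) (hγle : γ ≤ lam * μ * ρl / (16 * LG * ρu))
    (hlam : 0 < lam) (hlamle : lam ≤ 1 / (2 * Lg * ρu)) :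
    g x' y' - g x' (ystar x') ≤ (1 - lam * μ / (2 * ρu)) * (g x y - g x (ystar x))
      + ρl / (8 * γ) * ‖x' - x‖ ^ 2 - 1 / (4 * lam * ρu) * ‖y' - y‖ ^ 2
      + lam / ρl * ‖gy x y - v‖ ^ 2 := by
  have hLg : 0 < Lg := hμ.trans_le hμLg
  have hρu : 0 < ρu := hρl.trans_le hρ
  have hρu1 : 1 ≤ ρu := by nlinarith
  have hLG0 : 0 < LG := lt_of_lt_of_le (by positivity) hLG
  have hlamL : lam * (2 * Lg * ρu) ≤ 1 := (le_div_iff₀ (by positivity)).1 hlamle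
  have hu0 : 0 < lam * μ / ρu := by positivity
  have hu2 : lam * μ / ρu ≤ 1 / 2 := rate_le_half hμLg hlam hρu1 hlamL
  have hu1 : 0 < 1 - lam * μ / ρu := by linarith
  have hγLG : γ * (16 * LG) ≤ lam * μ / ρu * ρl := by
    refine (mul_le_mul_of_nonneg_right hγle (by positivity)).trans_eq ?_
    field_simp
  have hdecrease := sub_le_one_sub_mul_sub_of_preconditioned_step_of_pl (hgy x)
    (fun z => hgylipy x z y) (hPL x y) hB hBl hBu hρl hρu hρlu hlam hlamL hstep
  have hdrift := residual_le_one_add_mul_residual_add_norm_sq hμ hLg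
    (ε := lam * μ / ρu / (2 * (1 - lam * μ / ρu))) (by positivity)
    hgx hgxlipy hgxlipx hQG hGgrad hGlip x x' y'
  have hcoef := drift_coefficient_le hμ hμLg hLG hu0 (by linarith) hγ hγLG
  calc g x' y' - g x' (ystar x')
      ≤ (1 - lam * μ / ρu / 2) * (g x y - g x (ystar x)) - 1 / (4 * lam * ρu) * ‖y' - y‖ ^ 2
        + 2 * (lam / (2 * ρl) * ‖gy x y - v‖ ^ 2) + ρl / (8 * γ) * ‖x' - x‖ ^ 2 :=
        le_one_sub_half_mul_of_decrease_of_drift hu0 hu2 (by positivity) (by positivity)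
          hdecrease (hdrift.trans (by gcongr))
    _ = _ := by ring

/-- (Lemma 4 of the paper.) Descent of the lower-level residual along the
iterates: under the PL/quadratic-growth/smoothness assumptions on `g` and its value
function `G`, the adaptive update `y_{t+1} = y_t − λ B_t⁻¹ v_t` (encoded as
`B_t (y_t − y_{t+1}) = λ v_t`) with `ρ_l I ⪯ B_t ⪯ ρ_u I`, `ρ_l ρ_u ≥ 1`, `0 < ρ_l ≤ 1`,
and step sizes `γ ≤ min{λμρ_l/(16L_Gρ_u), μρ_l/(16L_g²ρ_u)}`, `λ ≤ 1/(2L_gρ_u)` satisfies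
the stated recursive inequality. -/
theorem stmt_12 {d p : ℕ} (μ Lg LG lam γ ρl ρu : ℝ)
    (hμ : 0 < μ) (hμLg : μ ≤ Lg)
    (hLG : max Lg (Lg ^ 2 / (2 * μ)) ≤ LG)
    (g : EuclideanSpace ℝ (Fin d) → EuclideanSpace ℝ (Fin p) → ℝ)
    (gx : EuclideanSpace ℝ (Fin d) → EuclideanSpace ℝ (Fin p) → EuclideanSpace ℝ (Fin d))
    (gy : EuclideanSpace ℝ (Fin d) → EuclideanSpace ℝ (Fin p) → EuclideanSpace ℝ (Fin p))
    (hgx : ∀ x y, HasGradientAt (fun x' => g x' y) (gx x y) x)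
    (hgy : ∀ x y, HasGradientAt (fun y' => g x y') (gy x y) y)
    (hgxlipy : ∀ x y₁ y₂, ‖gx x y₁ - gx x y₂‖ ≤ Lg * ‖y₁ - y₂‖)
    (hgxlipx : ∀ x₁ x₂ y, ‖gx x₁ y - gx x₂ y‖ ≤ Lg * ‖x₁ - x₂‖)
    (hgylipy : ∀ x y₁ y₂, ‖gy x y₁ - gy x y₂‖ ≤ Lg * ‖y₁ - y₂‖)
    (hgylipx : ∀ x₁ x₂ y, ‖gy x₁ y - gy x₂ y‖ ≤ Lg * ‖x₁ - x₂‖)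
    (G : EuclideanSpace ℝ (Fin d) → ℝ)
    (ystar : EuclideanSpace ℝ (Fin d) → EuclideanSpace ℝ (Fin p))
    (hGval : ∀ x, g x (ystar x) = G x) (hGlow : ∀ x y, G x ≤ g x y)
    (hPL : ∀ x y, ‖gy x y‖ ^ 2 ≥ 2 * μ * (g x y - G x))
    (hQG : ∀ x y, g x y - G x ≥ (μ / 2) * ‖y - ystar x‖ ^ 2)
    (hGgrad : ∀ x, HasGradientAt G (gx x (ystar x)) x)
    (hGlip : ∀ x₁ x₂, ‖gx x₁ (ystar x₁) - gx x₂ (ystar x₂)‖ ≤ LG * ‖x₁ - x₂‖)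
    (x : ℕ → EuclideanSpace ℝ (Fin d)) (y : ℕ → EuclideanSpace ℝ (Fin p))
    (v : ℕ → EuclideanSpace ℝ (Fin p))
    (B : ℕ → (EuclideanSpace ℝ (Fin p) →L[ℝ] EuclideanSpace ℝ (Fin p)))
    (hBsymm : ∀ t v' w', ⟪B t v', w'⟫ = ⟪v', B t w'⟫)
    (hBl : ∀ t v', ρl * ‖v'‖ ^ 2 ≤ ⟪B t v', v'⟫)
    (hBu : ∀ t v', ⟪B t v', v'⟫ ≤ ρu * ‖v'‖ ^ 2)
    (hρl : 0 < ρl) (hρl1 : ρl ≤ 1) (hρu : 0 < ρu) (hρlu : 1 ≤ ρl * ρu)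
    (hupd : ∀ t, B t (y t - y (t + 1)) = lam • v t)
    (hγ : 0 < γ)
    (hγle : γ ≤ min (lam * μ * ρl / (16 * LG * ρu)) (μ * ρl / (16 * Lg ^ 2 * ρu)))
    (hlam : 0 < lam) (hlamle : lam ≤ 1 / (2 * Lg * ρu)) :
    ∀ t, g (x (t + 1)) (y (t + 1)) - G (x (t + 1))
      ≤ (1 - lam * μ / (2 * ρu)) * (g (x t) (y t) - G (x t))
        + (ρl / (8 * γ)) * ‖x (t + 1) - x t‖ ^ 2
        - (1 / (4 * lam * ρu)) * ‖y (t + 1) - y t‖ ^ 2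
        + (lam / ρl) * ‖gy (x t) (y t) - v t‖ ^ 2 := by
  obtain rfl : G = fun x => g x (ystar x) := funext fun x => (hGval x).symm
  have hρu1 : 1 ≤ ρu := hρlu.trans (mul_le_of_le_one_left hρu.le hρl1)
  exact fun t => stmt_12_general hμ hμLg ((le_max_right _ _).trans hLG) hgx hgy hgxlipy hgxlipx
    hgylipy hPL hQG hGgrad hGlip (B := B t) (hBsymm t) (hBl t) (hBu t) hρl (hρl1.trans hρu1) hρlu
    (hupd t) hγ (hγle.trans (min_le_left _ _)) hlam hlamle
end

section
/- Assume the bilevel setting: g : ℝ^d × ℝ^p → ℝ is differentiable with ∇_x g and ∇_y g each L_g-Lipschitz in each variable; for every x, g(x,·) attains its minimum G(x) at y*(x), satisfies the μ-PL condition ‖∇_y g(x, y)‖² ≥ 2μ (g(x, y) − G(x)) and the quadratic growth condition g(x, y) − G(x) ≥ (μ/2)‖y − y*(x)‖² for all y, with 0 < μ ≤ L_g; G is differentiable with ∇G(x) = ∇_x g(x, y*(x)) and ∇G is L_G-Lipschitz with L_G ≥ max{L_g, L_g²/(2μ)}; F : ℝ^d → ℝ is differentiable with L_F-Lipschitz gradient;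 h : ℝ^d → ℝ is convex; Φ = F + h is bounded below by Φ* > −∞; and L̂, L̆, σ > 0. On a probability space, let random sequences (x_t, y_t, w_t, v_t, A_t, B_t)_{t=0}^{T} satisfy: A_t symmetric with A_t ⪰ ρ I_d; B_t symmetric with ρ_l I_p ⪯ B_t ⪯ ρ_u I_p, with ρ_l = ρ ∈ (0,1) and ρ_l ρ_u ≥ 1; x_{t+1} = argmin_{z}{ ⟨w_t, z⟩ + (1/(2γ))(z − x_t)ᵀ A_t (z − x_t) + h(z) }; y_{t+1} = y_t − λ B_t^{-1} v_t; and with b = q ∈ ℕ, epoch start s_t = q⌊t/q⌋ and n ∈ ℕ, the estimator error bounds E‖v_t − ∇_y g(x_t, y_t)‖² ≤ (2 L_g²/b) Σ_{i=s_t}^{t−1} E[‖x_{i+1} − x_i‖² + ‖y_{i+1} − y_i‖²] + σ²/n and E‖w_t − ∇F(x_t)‖² ≤ (4 L̂²/b) Σ_{i=s_t}^{t−1} E[‖x_{i+1} − x_i‖² + ‖y_{i+1} − y_i‖²] + (4 L̂²/μ) E[g(x_t, y_t) − G(x_t)] + L̆² σ²/n hold for all t. Suppose 0 < γ ≤ min{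 3ρ/(4 L_F), 4ρμ²λ/(19 L̂² ρ_u), ρ/(2√38 L̂²), ρ/(38 ρ_u λ L̂²), λρρ_u/4, λμρ_l/(16 L_G ρ_u), μρ_l/(16 L_g² ρ_u) } and 0 < λ ≤ min{ 1/(2 L_g ρ_u), √ρ_l/(4 √ρ_u L_g) }. For each t define 𝒢(x_t, ∇F(x_t), γ) = (x_t − x̄_{t+1})/γ, where x̄_{t+1} = argmin_{z}{ ⟨∇F(x_t), z⟩ + (1/(2γ))(z − x_t)ᵀ A_t (z − x_t) + h(z) }. Then (1/T) Σ_{t=0}^{T−1} E‖𝒢(x_t, ∇F(x_t), γ)‖² ≤ 32 ( Φ(x_0) − Φ* + g(x_0, y_0) − G(x_0) ) / (3 T γ ρ) + 38 L̆² σ² / (3 ρ² n) + 32 λ σ² / (3 ρ² γ n). -/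
open scoped RealInnerProductSpace
open MeasureTheory

/-!
The potential `Φ(x) + (g(x, y) - G(x))` decreases along each iteration, up to the errors of the two
estimators. The proximal step decreases `Φ` by a multiple of the squared gradient mapping and of
`‖Δx‖²`. The preconditioned gradient step decreases the lower-level gap by a multiple of the gap (by
the Polyak–Łojasiewicz condition) and of `‖Δy‖²`; the drift of the gap caused by `Δx` is controlled
through quadratic growth. Since an epoch has length `q` and the error bounds carry the factor
`1 / q`, the accumulated errors are at most a small multiple of `∑ ‖Δx‖² + ‖Δy‖²` and of the gaps,
which the decrease absorbs, plus the noise floor. Telescoping bounds the gradient mapping.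
-/

section Smoothness

variable {E : Type*} [NormedAddCommGroup E] [InnerProductSpace ℝ E] [CompleteSpace E]
  {F : E → ℝ} {F' : E → E} {L : ℝ}

/-- `L`-smoothness of `F`, with the gradient `F'` given explicitly. The constant is a real number
rather than an `ℝ≥0`, so no sign is imposed on it. -/
structure IsLSmooth (F : E → ℝ) (F' : E → E) (L : ℝ) : Prop where
  hasGradientAt : ∀ x, HasGradientAt F (F' x) x
  norm_sub_le : ∀ x y, ‖F' x - F' y‖ ≤ L * ‖x - y‖

namespace IsLSmooth

lemma neg (hF : IsLSmooth F F' L) : IsLSmooth (fun x => -F x) (fun x => -F' x) L where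
  hasGradientAt x := by
    rw [hasGradientAt_iff_hasFDerivAt, map_neg]
    exact (hF.hasGradientAt x).hasFDerivAt.neg
  norm_sub_le x y := by
    rw [neg_sub_neg, norm_sub_rev x y]
    exact hF.norm_sub_le y x

lemma hasDerivAt_comp_line (hF : IsLSmooth F F' L) (x e : E) (s : ℝ) :
    HasDerivAt (fun s : ℝ => F (x + s • e)) ⟪F' (x + s • e), e⟫ s := by
  have hline : HasDerivAt (fun s : ℝ => x + s • e) e s := by
    simpa using ((hasDerivAt_id s).smul_const e).const_add x
  exact HasDerivAt.congr_deriv (f := fun s : ℝ => F (x + s • e))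
    ((hF.hasGradientAt (x + s • e)).hasFDerivAt.comp_hasDerivAt s hline) (by simp)

lemma inner_gradient_line_le (hF : IsLSmooth F F' L) (x e : E) {s : ℝ} (hs : 0 ≤ s) :
    ⟪F' (x + s • e), e⟫ ≤ ⟪F' x, e⟫ + L * ‖e‖ ^ 2 * s := by
  have hcs : ⟪F' (x + s • e) - F' x, e⟫ ≤ L * ‖s • e‖ * ‖e‖ := by
    refine (real_inner_le_norm _ _).trans (mul_le_mul_of_nonneg_right ?_ (norm_nonneg e))
    simpa only [add_sub_cancel_left] using hF.norm_sub_le (x + s • e) x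
  rw [inner_sub_left, norm_smul, Real.norm_of_nonneg hs] at hcs
  linarith

lemma le_add_inner_add_sq (hF : IsLSmooth F F' L) (x y : E) :
    F y ≤ F x + ⟪F' x, y - x⟫ + L / 2 * ‖y - x‖ ^ 2 := by
  set e := y - x with he
  have hparabola (s : ℝ) : HasDerivAt (fun s : ℝ => F x + ⟪F' x, e⟫ * s + L / 2 * ‖e‖ ^ 2 * s ^ 2)
      (⟪F' x, e⟫ + L * ‖e‖ ^ 2 * s) s := by
    refine ((((hasDerivAt_id s).const_mul _).const_add _).add
      (((hasDerivAt_id s).pow 2).const_mul _)).congr_deriv ?_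
    simp only [id, Nat.cast_ofNat]
    ring
  have hle := image_le_of_deriv_right_le_deriv_boundary
    (fun s _ => (hF.hasDerivAt_comp_line x e s).continuousAt.continuousWithinAt)
    (fun s _ => (hF.hasDerivAt_comp_line x e s).hasDerivWithinAt)
    (by simp)
    (fun s _ => (hparabola s).continuousAt.continuousWithinAt)
    (fun s _ => (hparabola s).hasDerivWithinAt)
    (fun s hs => hF.inner_gradient_line_le x e hs.1)
    (Set.right_mem_Icc.2 (zero_le_one' ℝ))
  simpa [he] using hle

end IsLSmooth

end Smoothness

section Operators

variable {E : Type*} [NormedAddCommGroup E] [InnerProductSpace ℝ E]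

/-- `A` is symmetric with `A ⪰ ρ I`, the requirement on the adaptive matrices `A_t` and `B_t`. -/
structure IsSymmCoercive (A : E →ₗ[ℝ] E) (ρ : ℝ) : Prop where
  isSymmetric : A.IsSymmetric
  le_inner : ∀ z, ρ * ‖z‖ ^ 2 ≤ ⟪A z, z⟫

namespace IsSymmCoercive

variable {A : E →ₗ[ℝ] E} {ρ ρu : ℝ}

lemma inner_apply_comm (hA : IsSymmCoercive A ρ) (z z' : E) : ⟪A z, z'⟫ = ⟪A z', z⟫ := by
  rw [hA.isSymmetric, real_inner_comm]

lemma inner_nonneg (hA : IsSymmCoercive A ρ) (hρ : 0 ≤ ρ) (z : E) : 0 ≤ ⟪A z, z⟫ :=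
  (by positivity : 0 ≤ ρ * ‖z‖ ^ 2).trans (hA.le_inner z)

lemma mul_inner_le_norm_sq (hA : IsSymmCoercive A ρ) (hρ : 0 ≤ ρ) (z : E) :
    ρ * ⟪A z, z⟫ ≤ ‖A z‖ ^ 2 := by
  have hcs := mul_le_mul_of_nonneg_left (real_inner_le_norm (A z) z) hρ
  have hlow := mul_le_mul_of_nonneg_left (hA.le_inner z) hρ
  linarith [sq_nonneg (‖A z‖ - ρ * ‖z‖)]

lemma norm_sq_le_mul_inner (hA : IsSymmCoercive A ρ) (hρ : 0 ≤ ρ) (hρu : 0 < ρu)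
    (hu : ∀ z, ⟪A z, z⟫ ≤ ρu * ‖z‖ ^ 2) (z : E) : ‖A z‖ ^ 2 ≤ ρu * ⟪A z, z⟫ := by
  have hnonneg := hA.inner_nonneg hρ (ρu • z - A z)
  simp only [map_sub, map_smul, inner_sub_left, inner_sub_right, real_inner_smul_left,
    real_inner_smul_right, hA.inner_apply_comm (A z) z, real_inner_self_eq_norm_sq] at hnonneg
  have hupper := hu (A z)
  refine le_of_mul_le_mul_left ?_ hρu
  linarith

lemma surjective [CompleteSpace E] {B : E →L[ℝ] E} (hB : IsSymmCoercive (B : E →ₗ[ℝ] E) ρ)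
    (hρ : 0 < ρ) : Function.Surjective B := by
  refine (ContinuousLinearMap.isUnit_iff_bijective.1 ?_).2
  refine ContinuousLinearMap.isUnit_of_forall_le_norm_inner_map B (c := ⟨ρ, hρ.le⟩) hρ fun z => ?_
  rw [mul_comm]
  exact (hB.le_inner z).trans (Real.le_norm_self _)

-- With `B ζ = p`, all terms are compared in the `B`-norm, where the defect is
-- `‖4ζ - 5η‖_B² / 40 ≥ 0`; this is what fixes the constants `3/5` and `3/8`.
lemma descent_of_apply_eq [CompleteSpace E] {B : E →L[ℝ] E}
    (hB : IsSymmCoercive (B : E →ₗ[ℝ] E) ρ) (hρ : 0 < ρ) (hρu : 0 < ρu)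
    (hu : ∀ z, ⟪B z, z⟫ ≤ ρu * ‖z‖ ^ 2) {u η : E} (hη : B η = u) (p : E) :
    3 / 5 * (‖p‖ ^ 2 / ρu) + 3 / 8 * (ρ * ‖η‖ ^ 2) ≤ ⟪p, η⟫ + ‖u - p‖ ^ 2 / ρ := by
  obtain ⟨ζ, hζ⟩ := hB.surjective hρ p
  have hp : ‖p‖ ^ 2 / ρu ≤ ⟪B ζ, ζ⟫ := by
    rw [div_le_iff₀' hρu, ← hζ]
    exact hB.norm_sq_le_mul_inner hρ.le hρu hu ζ
  have herr : ⟪B (η - ζ), η - ζ⟫ ≤ ‖u - p‖ ^ 2 / ρ := by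
    rw [le_div_iff₀' hρ, ← hζ, ← hη, ← map_sub]
    exact hB.mul_inner_le_norm_sq hρ.le (η - ζ)
  have hcross : ⟪B η, ζ⟫ = ⟪B ζ, η⟫ := hB.inner_apply_comm η ζ
  have hsq : 0 ≤ ⟪B ((4 : ℝ) • ζ - (5 : ℝ) • η), (4 : ℝ) • ζ - (5 : ℝ) • η⟫ :=
    hB.inner_nonneg hρ.le _
  simp only [map_sub, map_smul, inner_sub_left, inner_sub_right, real_inner_smul_left,
    real_inner_smul_right, hcross] at hsq herr
  have hlow : ρ * ‖η‖ ^ 2 ≤ ⟪B η, η⟫ := hB.le_inner η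
  rw [← hζ] at hp herr ⊢
  linarith

lemma descent_of_apply_eq_smul [CompleteSpace E] {B : E →L[ℝ] E}
    (hB : IsSymmCoercive (B : E →ₗ[ℝ] E) ρ) (hρ : 0 < ρ) (hρu : 0 < ρu)
    (hu : ∀ z, ⟪B z, z⟫ ≤ ρu * ‖z‖ ^ 2) {lam : ℝ} (hlam : 0 < lam) {v η : E}
    (hη : B η = lam • v) (a : E) :
    3 / 5 * (lam / ρu) * ‖a‖ ^ 2 + 3 / 8 * (ρ / lam) * ‖η‖ ^ 2
      ≤ ⟪a, η⟫ + lam / ρ * ‖v - a‖ ^ 2 := by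
  have hscaled := hB.descent_of_apply_eq hρ hρu hu hη (lam • a)
  rw [← smul_sub, norm_smul, norm_smul, real_inner_smul_left, mul_pow, mul_pow,
    Real.norm_of_nonneg hlam.le] at hscaled
  refine le_of_mul_le_mul_left ?_ hlam
  calc lam * (3 / 5 * (lam / ρu) * ‖a‖ ^ 2 + 3 / 8 * (ρ / lam) * ‖η‖ ^ 2)
      = 3 / 5 * (lam ^ 2 * ‖a‖ ^ 2 / ρu) + 3 / 8 * (ρ * ‖η‖ ^ 2) := by field_simp
    _ ≤ lam * ⟪a, η⟫ + lam ^ 2 * ‖v - a‖ ^ 2 / ρ := hscaled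
    _ = lam * (⟪a, η⟫ + lam / ρ * ‖v - a‖ ^ 2) := by ring

end IsSymmCoercive

end Operators

section Prox

variable {E : Type*} [NormedAddCommGroup E] [InnerProductSpace ℝ E]

/-- The objective `⟨w, z⟩ + (z - x)ᵀ A (z - x) / (2γ) + h z` minimized over `z` in a proximal step
from `x` along the (estimated) gradient `w`. -/
noncomputable def proxObjective (A : E →ₗ[ℝ] E) (h : E → ℝ) (γ : ℝ) (w x z : E) : ℝ :=
  ⟪w, z⟫ + (1 / (2 * γ)) * ⟪A (z - x), z - x⟫ + h z

/-- `x'` is a result of the proximal step from `x` along `w`, i.e. a minimizer of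
`proxObjective`. -/
def IsProxStep (A : E →ₗ[ℝ] E) (h : E → ℝ) (γ : ℝ) (w x x' : E) : Prop :=
  ∀ z, proxObjective A h γ w x x' ≤ proxObjective A h γ w x z

lemma nonneg_of_forall_add_mul_nonneg {a b : ℝ} (hab : ∀ s, 0 < s → s ≤ 1 → 0 ≤ a + s * b) :
    0 ≤ a := by
  have hlim : Filter.Tendsto (fun s : ℝ => a + s * b) (nhdsWithin 0 (Set.Ioi 0)) (nhds a) := by
    refine Filter.Tendsto.mono_left ?_ nhdsWithin_le_nhds
    simpa using (by fun_prop : Continuous fun s : ℝ => a + s * b).tendsto 0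
  refine ge_of_tendsto hlim ?_
  filter_upwards [Ioc_mem_nhdsGT (zero_lt_one' ℝ)] with s hs using hab s hs.1 hs.2

namespace IsProxStep

variable {A : E →ₗ[ℝ] E} {h : E → ℝ} {γ ρ : ℝ} {w w₁ w₂ x x' z₁ z₂ : E}

lemma variational_inequality (hx' : IsProxStep A h γ w x x') (hA : A.IsSymmetric)
    (hconv : ConvexOn ℝ Set.univ h) (z : E) :
    h x' ≤ h z + ⟪w, z - x'⟫ + 1 / γ * ⟪A (x' - x), z - x'⟫ := by
  suffices hderiv : 0 ≤ ⟪w, z - x'⟫ + 1 / γ * ⟪A (x' - x), z - x'⟫ + h z - h x' by linarith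
  refine nonneg_of_forall_add_mul_nonneg (b := 1 / (2 * γ) * ⟪A (z - x'), z - x'⟫)
    fun s hs hs1 => nonneg_of_mul_nonneg_right ?_ hs
  have hmin := hx' (x' + s • (z - x'))
  have hchord : h (x' + s • (z - x')) ≤ (1 - s) * h x' + s * h z := by
    have hcomb : x' + s • (z - x') = (1 - s) • x' + s • z := by module
    rw [hcomb]
    exact hconv.2 (Set.mem_univ x') (Set.mem_univ z) (sub_nonneg.2 hs1) hs.le (by ring)
  have hsymm : ⟪A (z - x'), x' - x⟫ = ⟪A (x' - x), z - x'⟫ := by rw [hA, real_inner_comm]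
  have hhalf : 1 / γ = 2 * (1 / (2 * γ)) := by rw [one_div, one_div, mul_inv]; ring
  simp only [proxObjective, add_sub_right_comm x', map_add, map_smul, inner_add_left,
    inner_add_right, real_inner_smul_left, real_inner_smul_right, hsymm] at hmin
  rw [hhalf]
  linarith

lemma sufficient_decrease (hx' : IsProxStep A h γ w x x') (hA : IsSymmCoercive A ρ)
    (hconv : ConvexOn ℝ Set.univ h) (hγ : 0 ≤ γ) :
    h x' + ⟪w, x' - x⟫ + ρ / γ * ‖x' - x‖ ^ 2 ≤ h x := by
  have hvi := hx'.variational_inequality hA.isSymmetric hconv x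
  rw [← neg_sub x' x, inner_neg_right, inner_neg_right] at hvi
  have hcoercive : ρ / γ * ‖x' - x‖ ^ 2 ≤ 1 / γ * ⟪A (x' - x), x' - x⟫ := by
    rw [div_eq_mul_one_div, mul_comm ρ, mul_assoc]
    exact mul_le_mul_of_nonneg_left (hA.le_inner _) (by positivity)
  linarith

lemma mul_norm_sub_sq_le_inner (hz₁ : IsProxStep A h γ w₁ x z₁) (hz₂ : IsProxStep A h γ w₂ x z₂)
    (hA : IsSymmCoercive A ρ) (hconv : ConvexOn ℝ Set.univ h) (hγ : 0 ≤ γ) :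
    ρ / γ * ‖z₂ - z₁‖ ^ 2 ≤ ⟪w₁ - w₂, z₂ - z₁⟫ := by
  have hvi₁ := hz₁.variational_inequality hA.isSymmetric hconv z₂
  have hvi₂ := hz₂.variational_inequality hA.isSymmetric hconv z₁
  have hcoercive : ρ / γ * ‖z₂ - z₁‖ ^ 2 ≤ 1 / γ * ⟪A (z₂ - z₁), z₂ - z₁⟫ := by
    rw [div_eq_mul_one_div, mul_comm ρ, mul_assoc]
    exact mul_le_mul_of_nonneg_left (hA.le_inner _) (by positivity)
  rw [← neg_sub z₂ z₁, inner_neg_right, inner_neg_right,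
    ← sub_add_sub_cancel z₂ z₁ x, map_add, inner_add_left] at hvi₂
  rw [inner_sub_left]
  linarith

lemma norm_sub_sq_le (hz₁ : IsProxStep A h γ w₁ x z₁) (hz₂ : IsProxStep A h γ w₂ x z₂)
    (hA : IsSymmCoercive A ρ) (hconv : ConvexOn ℝ Set.univ h) (hγ : 0 < γ) (hρ : 0 < ρ) :
    ‖z₂ - x‖ ^ 2 ≤ ‖z₁ - x‖ ^ 2 + ‖z₁ - x - (γ / ρ) • (w₂ - w₁)‖ ^ 2 := by
  have hmono : ‖z₂ - z₁‖ ^ 2 ≤ - ⟪(γ / ρ) • (w₂ - w₁), z₂ - z₁⟫ := by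
    have hfirm := hz₁.mul_norm_sub_sq_le_inner hz₂ hA hconv hγ.le
    rw [real_inner_smul_left, ← mul_neg, ← inner_neg_left, neg_sub, ← div_le_iff₀' (by positivity),
      div_eq_inv_mul, inv_div]
    exact hfirm
  have hsq := sq_nonneg ‖z₁ - x - (γ / ρ) • (w₂ - w₁) - (z₂ - z₁)‖
  rw [norm_sub_sq_real, inner_sub_left] at hsq
  rw [← sub_add_sub_cancel' z₁ x z₂, norm_add_sq_real]
  linarith

lemma composite_decrease [CompleteSpace E] {F : E → ℝ} {F' : E → E} {LF : ℝ} {xbar : E}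
    (hx' : IsProxStep A h γ w x x') (hxbar : IsProxStep A h γ (F' x) x xbar)
    (hA : IsSymmCoercive A ρ) (hconv : ConvexOn ℝ Set.univ h) (hF : IsLSmooth F F' LF)
    (hγ : 0 < γ) (hρ : 0 < ρ) (hLF : LF ≤ 3 / 4 * (ρ / γ)) :
    F x' + h x' + 3 / 32 * (ρ / γ) * ‖xbar - x‖ ^ 2 + 1 / 4 * (ρ / γ) * ‖x' - x‖ ^ 2
      ≤ F x + h x + γ / ρ * ‖w - F' x‖ ^ 2 := by
  have hdescent := hF.le_add_inner_add_sq x x'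
  have hprox := hx'.sufficient_decrease hA hconv hγ.le
  have hxbar_le := hx'.norm_sub_sq_le hxbar hA hconv hγ hρ
  have hcurv := mul_le_mul_of_nonneg_right hLF (sq_nonneg ‖x' - x‖)
  set d := x' - x
  set e := (γ / ρ) • (F' x - w) with he
  have hre : F' x - w = (ρ / γ) • e := by
    rw [he, smul_smul, div_mul_div_cancel₀ hγ.ne', div_self hρ.ne', one_smul]
  have hnoise : γ / ρ * ‖w - F' x‖ ^ 2 = ρ / γ * ‖e‖ ^ 2 := by
    rw [he, norm_sub_rev, norm_smul, Real.norm_of_nonneg (by positivity)]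
    field_simp
  have hinner : ⟪F' x, d⟫ - ⟪w, d⟫ = ρ / γ * ⟪d, e⟫ := by
    rw [← inner_sub_left, hre, real_inner_smul_left, real_inner_comm]
  have hquad : 3 / 32 * ‖xbar - x‖ ^ 2 + ⟪d, e⟫ ≤ 3 / 8 * ‖d‖ ^ 2 + ‖e‖ ^ 2 := by
    rw [norm_sub_sq_real d e] at hxbar_le
    linarith [real_inner_le_norm d e, sq_nonneg (6 * ‖d‖ - 13 * ‖e‖), sq_nonneg ‖e‖]
  have hquad_scaled := mul_le_mul_of_nonneg_left hquad (by positivity : 0 ≤ ρ / γ)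
  rw [hnoise]
  linarith

end IsProxStep

end Prox

section StepSizes

/-- The weight with which the squared displacements `‖Δx_i‖² + ‖Δy_i‖²` enter the accumulated
errors `γ/ρ ‖w_t - ∇F(x_t)‖² + lam/ρ ‖v_t - ∇_y g(x_t, y_t)‖²` of the two estimators. -/
noncomputable def displacementWeight (L Lhat ρ γ lam : ℝ) : ℝ :=
  4 * Lhat ^ 2 * (γ / ρ) + 2 * L ^ 2 * (lam / ρ)

/-- The relations between the problem constants, the spectral bounds `ρ` and `ρu` of the adaptive
matrices and the step sizes `γ` and `lam` under which AdaVSPAG decreases its Lyapunov function.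
They force `LF` to be positive and `Lhat` to be nonzero, since otherwise the upper bound on `γ`
that divides by them is nonpositive. -/
structure AdmissibleStepSizes (μ L LG LF Lhat ρ ρu γ lam : ℝ) : Prop where
  mu_pos : 0 < μ
  mu_le : μ ≤ L
  max_le : max L (L ^ 2 / (2 * μ)) ≤ LG
  rho_pos : 0 < ρ
  rho_le : ρ ≤ ρu
  one_le_rho_mul : 1 ≤ ρ * ρu
  gamma_pos : 0 < γ
  gamma_le_upper : γ ≤ 3 * ρ / (4 * LF)
  gamma_le_estimator : γ ≤ 4 * ρ * μ ^ 2 * lam / (19 * Lhat ^ 2 * ρu)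
  gamma_le_value : γ ≤ lam * μ * ρ / (16 * LG * ρu)
  lam_pos : 0 < lam
  lam_le : lam ≤ √ρ / (4 * √ρu * L)

namespace AdmissibleStepSizes

variable {μ L LG LF Lhat ρ ρu γ lam : ℝ}

lemma lipschitz_pos (hs : AdmissibleStepSizes μ L LG LF Lhat ρ ρu γ lam) : 0 < L :=
  hs.mu_pos.trans_le hs.mu_le

lemma rhou_pos (hs : AdmissibleStepSizes μ L LG LF Lhat ρ ρu γ lam) : 0 < ρu :=
  hs.rho_pos.trans_le hs.rho_le

lemma lipschitz_le_value (hs : AdmissibleStepSizes μ L LG LF Lhat ρ ρu γ lam) : L ≤ LG :=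
  (le_max_left _ _).trans hs.max_le

lemma lipschitz_sq_le (hs : AdmissibleStepSizes μ L LG LF Lhat ρ ρu γ lam) :
    L ^ 2 ≤ LG * (2 * μ) := by
  have hμ := hs.mu_pos
  exact (div_le_iff₀ (by positivity)).1 ((le_max_right _ _).trans hs.max_le)

lemma upper_le (hs : AdmissibleStepSizes μ L LG LF Lhat ρ ρu γ lam) :
    LF ≤ 3 / 4 * (ρ / γ) := by
  have hγ := hs.gamma_pos
  have hρ := hs.rho_pos
  have hle := mul_le_of_le_div₀ (by positivity) ?_ hs.gamma_le_upper
  · rw [mul_div_assoc', le_div_iff₀ hγ]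
    linarith
  · by_contra! hneg
    exact (hγ.trans_le hs.gamma_le_upper).not_ge
      (div_nonpos_of_nonneg_of_nonpos (by positivity) hneg.le)

lemma estimator_mul_le (hs : AdmissibleStepSizes μ L LG LF Lhat ρ ρu γ lam) :
    Lhat ^ 2 * (γ / ρ) ≤ 4 / 19 * (μ ^ 2 * (lam / ρu)) := by
  have hρ := hs.rho_pos
  have hρu := hs.rhou_pos
  have hlam := hs.lam_pos
  have hle := mul_le_of_le_div₀ (by positivity) (by positivity) hs.gamma_le_estimator
  rw [mul_div_assoc', mul_div_assoc', mul_div_assoc', div_le_div_iff₀ hρ hρu]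
  linarith

lemma value_mul_le (hs : AdmissibleStepSizes μ L LG LF Lhat ρ ρu γ lam) :
    LG * (γ / ρ) ≤ μ * (lam / ρu) / 16 := by
  have hρ := hs.rho_pos
  have hρu := hs.rhou_pos
  have hLG := hs.lipschitz_pos.trans_le hs.lipschitz_le_value
  have hle := (le_div_iff₀ (by positivity)).1 hs.gamma_le_value
  rw [mul_div_assoc', mul_div_assoc', div_div, div_le_div_iff₀ hρ (by positivity)]
  linarith

lemma lipschitz_sq_mul_le (hs : AdmissibleStepSizes μ L LG LF Lhat ρ ρu γ lam) :
    L ^ 2 * (γ / ρ) ≤ μ ^ 2 * (lam / ρu) / 8 := by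
  have hr : 0 ≤ γ / ρ := div_nonneg hs.gamma_pos.le hs.rho_pos.le
  calc L ^ 2 * (γ / ρ) ≤ LG * (2 * μ) * (γ / ρ) := mul_le_mul_of_nonneg_right hs.lipschitz_sq_le hr
    _ = 2 * μ * (LG * (γ / ρ)) := by ring
    _ ≤ 2 * μ * (μ * (lam / ρu) / 16) :=
        mul_le_mul_of_nonneg_left hs.value_mul_le (by linarith [hs.mu_pos])
    _ = μ ^ 2 * (lam / ρu) / 8 := by ring

lemma gamma_ratio_le (hs : AdmissibleStepSizes μ L LG LF Lhat ρ ρu γ lam) :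
    γ / ρ ≤ lam / ρu / 16 := by
  have hr : 0 ≤ γ / ρ := div_nonneg hs.gamma_pos.le hs.rho_pos.le
  have hμLG := mul_le_mul_of_nonneg_right (hs.mu_le.trans hs.lipschitz_le_value) hr
  refine le_of_mul_le_mul_left ?_ hs.mu_pos
  linarith [hs.value_mul_le]

lemma lam_mul_lipschitz_le (hs : AdmissibleStepSizes μ L LG LF Lhat ρ ρu γ lam) :
    lam * L ≤ √ρ / (4 * √ρu) := by
  have hL := hs.lipschitz_pos
  rw [← le_div_iff₀ hL, div_div]
  exact hs.lam_le

lemma lam_mul_lipschitz_sq_div_le (hs : AdmissibleStepSizes μ L LG LF Lhat ρ ρu γ lam) :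
    (lam * L) ^ 2 / ρ ≤ 1 / (16 * ρu) := by
  have hρ := hs.rho_pos
  have hρu := hs.rhou_pos
  have hsq := pow_le_pow_left₀ (mul_pos hs.lam_pos hs.lipschitz_pos).le hs.lam_mul_lipschitz_le 2
  rw [div_pow, mul_pow 4, Real.sq_sqrt hρ.le, Real.sq_sqrt hρu.le] at hsq
  rw [div_le_iff₀ hρ]
  calc (lam * L) ^ 2 ≤ ρ / (4 ^ 2 * ρu) := hsq
    _ = 1 / (16 * ρu) * ρ := by ring

lemma inv_rhou_le (hs : AdmissibleStepSizes μ L LG LF Lhat ρ ρu γ lam) :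
    1 / (16 * ρu) ≤ ρ / 16 := by
  rw [div_le_div_iff₀ (by linarith [hs.rhou_pos]) (by norm_num)]
  linarith [hs.one_le_rho_mul]

lemma lam_mul_lipschitz_le_rho (hs : AdmissibleStepSizes μ L LG LF Lhat ρ ρu γ lam) :
    lam * L ≤ ρ / 4 := by
  have hρ := hs.rho_pos
  have hsq := (div_le_iff₀ hρ).1 (hs.lam_mul_lipschitz_sq_div_le.trans hs.inv_rhou_le)
  refine le_of_sq_le_sq ?_ (by positivity)
  linarith

lemma lipschitz_sq_mul_lam_le (hs : AdmissibleStepSizes μ L LG LF Lhat ρ ρu γ lam) :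
    L ^ 2 * (lam / ρu) * lam ≤ ρ / 16 := by
  have hρ := hs.rho_pos
  calc L ^ 2 * (lam / ρu) * lam = (lam * L) ^ 2 / ρu := by ring
    _ ≤ (lam * L) ^ 2 / ρ := by gcongr; exact hs.rho_le
    _ ≤ ρ / 16 := hs.lam_mul_lipschitz_sq_div_le.trans hs.inv_rhou_le

lemma displacementWeight_mul_lam_le (hs : AdmissibleStepSizes μ L LG LF Lhat ρ ρu γ lam) :
    displacementWeight L Lhat ρ γ lam * lam ≤ 3 / 16 * ρ := by
  have hupper : Lhat ^ 2 * (γ / ρ) * lam ≤ ρ / 76 := by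
    have hk : 0 ≤ lam / ρu * lam :=
      mul_nonneg (div_nonneg hs.lam_pos.le hs.rhou_pos.le) hs.lam_pos.le
    have hμL := mul_le_mul_of_nonneg_right (pow_le_pow_left₀ hs.mu_pos.le hs.mu_le 2) hk
    have hest := mul_le_mul_of_nonneg_right hs.estimator_mul_le hs.lam_pos.le
    linarith [hs.lipschitz_sq_mul_lam_le]
  have hlower : L ^ 2 * (lam / ρ) * lam ≤ ρ / 16 := by
    calc L ^ 2 * (lam / ρ) * lam = (lam * L) ^ 2 / ρ := by ring
      _ ≤ ρ / 16 := hs.lam_mul_lipschitz_sq_div_le.trans hs.inv_rhou_le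
  rw [displacementWeight]
  linarith [hs.rho_pos]

lemma gap_weight_le (hs : AdmissibleStepSizes μ L LG LF Lhat ρ ρu γ lam) :
    8 / 3 * (L ^ 2 * (γ / ρ)) / μ + 4 * Lhat ^ 2 / μ * (γ / ρ) ≤ 6 / 5 * (lam / ρu) * μ := by
  have hμ := hs.mu_pos
  have hk : 0 ≤ lam / ρu := div_nonneg hs.lam_pos.le hs.rhou_pos.le
  calc 8 / 3 * (L ^ 2 * (γ / ρ)) / μ + 4 * Lhat ^ 2 / μ * (γ / ρ)
      = (8 / 3 * (L ^ 2 * (γ / ρ)) + 4 * (Lhat ^ 2 * (γ / ρ))) / μ := by ring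
    _ ≤ 6 / 5 * (lam / ρu) * μ := by
      rw [div_le_iff₀ hμ]
      linarith [hs.lipschitz_sq_mul_le, hs.estimator_mul_le, mul_nonneg hk (sq_nonneg μ)]

lemma lower_displacement_weight_le (hs : AdmissibleStepSizes μ L LG LF Lhat ρ ρu γ lam) :
    16 * (L ^ 2 * (γ / ρ)) + L / 2 + displacementWeight L Lhat ρ γ lam ≤ 3 / 8 * (ρ / lam) := by
  have hlam := hs.lam_pos
  have hratio := mul_le_mul_of_nonneg_left hs.gamma_ratio_le (by positivity : 0 ≤ L ^ 2 * lam)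
  rw [← mul_div_assoc (3 / 8), le_div_iff₀ hlam]
  linarith [hs.lipschitz_sq_mul_lam_le, hs.lam_mul_lipschitz_le_rho,
    hs.displacementWeight_mul_lam_le]

lemma displacementWeight_le (hs : AdmissibleStepSizes μ L LG LF Lhat ρ ρu γ lam) :
    displacementWeight L Lhat ρ γ lam ≤ 1 / 32 * (ρ / γ) := by
  have hlam := hs.lam_pos
  have hρ := hs.rho_pos
  have hγ := hs.gamma_pos
  have hρu := hs.rhou_pos
  have hC : 0 ≤ displacementWeight L Lhat ρ γ lam := by unfold displacementWeight; positivity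
  rw [← inv_div γ ρ, ← div_eq_mul_inv, le_div_iff₀ (by positivity)]
  calc displacementWeight L Lhat ρ γ lam * (γ / ρ)
      ≤ displacementWeight L Lhat ρ γ lam * (lam / ρu / 16) :=
        mul_le_mul_of_nonneg_left hs.gamma_ratio_le hC
    _ = displacementWeight L Lhat ρ γ lam * lam / (16 * ρu) := by ring
    _ ≤ 3 / 16 * ρ / (16 * ρu) :=
        div_le_div_of_nonneg_right hs.displacementWeight_mul_lam_le (by positivity)
    _ ≤ 1 / 32 := by
        rw [div_le_div_iff₀ (by positivity) (by norm_num)]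
        linarith [hs.rho_le]

lemma curvature_le (hs : AdmissibleStepSizes μ L LG LF Lhat ρ ρu γ lam) :
    (L + LG) / 2 ≤ 1 / 64 * (ρ / γ) := by
  have hlam := hs.lam_pos
  have hρu := hs.rhou_pos
  have hr : 0 < γ / ρ := div_pos hs.gamma_pos hs.rho_pos
  have hμk : μ * (lam / ρu) ≤ 1 / 4 := by
    calc μ * (lam / ρu) ≤ L * (lam / ρu) := by gcongr; exact hs.mu_le
      _ = lam * L / ρu := by ring
      _ ≤ ρ / 4 / ρu := by gcongr; exact hs.lam_mul_lipschitz_le_rho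
      _ ≤ 1 / 4 := by
        rw [div_le_iff₀ hρu]
        linarith [hs.rho_le]
  have hL := mul_le_mul_of_nonneg_right hs.lipschitz_le_value hr.le
  rw [← inv_div γ ρ, ← div_eq_mul_inv, le_div_iff₀ hr]
  linarith [hs.value_mul_le]

end AdmissibleStepSizes

end StepSizes

section LowerLevel

/-- The lower-level problem `min_y g(x, y)` with partial gradients `gx` and `gy`, value function `G`
and minimizers `ystar`: partial smoothness of `g`, the Polyak–Łojasiewicz and quadratic growth
conditions of `g(x, ·)`, and smoothness of `G` with the Danskin gradient `∇_x g(x, y*(x))`. For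
`0 ≤ μ` the minimality of `ystar x` is part of `quadratic_growth`. -/
structure IsPLLowerLevel {E H : Type*} [NormedAddCommGroup E] [InnerProductSpace ℝ E]
    [CompleteSpace E] [NormedAddCommGroup H] [InnerProductSpace ℝ H] [CompleteSpace H]
    (μ L LG : ℝ) (g : E → H → ℝ) (gx : E → H → E) (gy : E → H → H) (G : E → ℝ)
    (ystar : E → H) : Prop where
  smooth_fst : ∀ y, IsLSmooth (g · y) (gx · y) L
  smooth_snd : ∀ x, IsLSmooth (g x) (gy x) L
  gx_lipschitz_snd : ∀ x y₁ y₂, ‖gx x y₁ - gx x y₂‖ ≤ L * ‖y₁ - y₂‖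
  value_eq : ∀ x, g x (ystar x) = G x
  polyak_lojasiewicz : ∀ x y, 2 * μ * (g x y - G x) ≤ ‖gy x y‖ ^ 2
  quadratic_growth : ∀ x y, μ / 2 * ‖y - ystar x‖ ^ 2 ≤ g x y - G x
  smooth_value : IsLSmooth G (fun x => gx x (ystar x)) LG

namespace IsPLLowerLevel

variable {E H : Type*} [NormedAddCommGroup E] [InnerProductSpace ℝ E] [CompleteSpace E]
  [NormedAddCommGroup H] [InnerProductSpace ℝ H] [CompleteSpace H]
  {μ L LG : ℝ} {g : E → H → ℝ} {gx : E → H → E} {gy : E → H → H} {G : E → ℝ} {ystar : E → H}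

lemma gap_nonneg (hg : IsPLLowerLevel μ L LG g gx gy G ystar) (hμ : 0 ≤ μ) (x : E) (y : H) :
    0 ≤ g x y - G x :=
  (by positivity : 0 ≤ μ / 2 * ‖y - ystar x‖ ^ 2).trans (hg.quadratic_growth x y)

-- Moving `x` changes `g` and `G` along `∇_x g(x, y')` and `∇_x g(x, y*(x))`; the first-order terms
-- cancel up to the distance from `y'` to `y*(x)`, which is split at `y`.
lemma gap_le (hg : IsPLLowerLevel μ L LG g gx gy G ystar) (x x' : E) (y y' : H) :
    g x' y' - G x' ≤ g x y - G x + ⟪gy x y, y' - y⟫ + L / 2 * ‖y' - y‖ ^ 2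
      + L * ‖y' - y‖ * ‖x' - x‖ + L * ‖y - ystar x‖ * ‖x' - x‖
      + (L + LG) / 2 * ‖x' - x‖ ^ 2 := by
  have hupper := (hg.smooth_fst y').le_add_inner_add_sq x x'
  have hlower := (hg.smooth_snd x).le_add_inner_add_sq y y'
  have hvalue := hg.smooth_value.neg.le_add_inner_add_sq x x'
  have hmove : ⟪gx x y' - gx x y, x' - x⟫ ≤ L * ‖y' - y‖ * ‖x' - x‖ :=
    (real_inner_le_norm _ _).trans
      (mul_le_mul_of_nonneg_right (hg.gx_lipschitz_snd x y' y) (norm_nonneg _))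
  have hdist : ⟪gx x y - gx x (ystar x), x' - x⟫ ≤ L * ‖y - ystar x‖ * ‖x' - x‖ :=
    (real_inner_le_norm _ _).trans
      (mul_le_mul_of_nonneg_right (hg.gx_lipschitz_snd x y (ystar x)) (norm_nonneg _))
  rw [inner_sub_left] at hmove hdist
  rw [inner_neg_left] at hvalue
  linarith

lemma lipschitz_mul_dist_mul_le (hg : IsPLLowerLevel μ L LG g gx gy G ystar) (hμ : 0 < μ) {r : ℝ}
    (hr : 0 < r) (x : E) (y : H) (a : ℝ) :
    L * ‖y - ystar x‖ * a
      ≤ 8 / 3 * (L ^ 2 * r) / μ * (g x y - G x) + 3 / 16 * r⁻¹ * a ^ 2 := by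
  have hgrowth : ‖y - ystar x‖ ^ 2 ≤ 2 / μ * (g x y - G x) := by
    rw [div_mul_eq_mul_div, le_div_iff₀ hμ]
    linarith [hg.quadratic_growth x y]
  have hyoung := two_mul_le_add_mul_sq (a := L * ‖y - ystar x‖) (b := a)
    (by positivity : 0 < 8 / 3 * r)
  rw [mul_inv] at hyoung
  calc L * ‖y - ystar x‖ * a ≤ 4 / 3 * (L ^ 2 * r) * ‖y - ystar x‖ ^ 2 + 3 / 16 * r⁻¹ * a ^ 2 := by
        linarith
    _ ≤ 4 / 3 * (L ^ 2 * r) * (2 / μ * (g x y - G x)) + 3 / 16 * r⁻¹ * a ^ 2 := by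
        gcongr
    _ = 8 / 3 * (L ^ 2 * r) / μ * (g x y - G x) + 3 / 16 * r⁻¹ * a ^ 2 := by ring

lemma gap_decrease {LF Lhat ρ ρu γ lam : ℝ} (hg : IsPLLowerLevel μ L LG g gx gy G ystar)
    (hs : AdmissibleStepSizes μ L LG LF Lhat ρ ρu γ lam) {B : H →L[ℝ] H}
    (hB : IsSymmCoercive (B : H →ₗ[ℝ] H) ρ) (hu : ∀ z, ⟪B z, z⟫ ≤ ρu * ‖z‖ ^ 2)
    (x x' : E) {y y' v : H} (hy' : B (y - y') = lam • v) :
    g x' y' - G x' + displacementWeight L Lhat ρ γ lam * (‖x' - x‖ ^ 2 + ‖y' - y‖ ^ 2)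
        + 4 * Lhat ^ 2 / μ * (γ / ρ) * (g x y - G x)
      ≤ g x y - G x + 1 / 4 * (ρ / γ) * ‖x' - x‖ ^ 2 + lam / ρ * ‖v - gy x y‖ ^ 2 := by
  have hμ := hs.mu_pos
  have hr : 0 < γ / ρ := div_pos hs.gamma_pos hs.rho_pos
  have hgap := hg.gap_le x x' y y'
  have hmove := two_mul_le_add_mul_sq (a := L * ‖y' - y‖) (b := ‖x' - x‖)
    (by positivity : 0 < 32 * (γ / ρ))
  have hdist := hg.lipschitz_mul_dist_mul_le hμ hr x y ‖x' - x‖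
  have hdescent :=
    hB.descent_of_apply_eq_smul hs.rho_pos hs.rhou_pos hu hs.lam_pos hy' (gy x y)
  rw [← neg_sub y' y, inner_neg_right, norm_neg] at hdescent
  have hPL := mul_le_mul_of_nonneg_left (hg.polyak_lojasiewicz x y)
    (div_pos hs.lam_pos hs.rhou_pos).le
  have hgap_weight := mul_le_mul_of_nonneg_right hs.gap_weight_le (hg.gap_nonneg hμ.le x y)
  have hlower_weight := mul_le_mul_of_nonneg_right hs.lower_displacement_weight_le
    (sq_nonneg ‖y' - y‖)
  have hupper_weight := mul_le_mul_of_nonneg_right hs.displacementWeight_le (sq_nonneg ‖x' - x‖)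
  have hcurvature := mul_le_mul_of_nonneg_right hs.curvature_le (sq_nonneg ‖x' - x‖)
  have hslack : 0 ≤ (γ / ρ)⁻¹ * ‖x' - x‖ ^ 2 := by positivity
  rw [mul_inv] at hmove
  rw [← inv_div γ ρ] at hupper_weight hcurvature ⊢
  linarith

end IsPLLowerLevel

end LowerLevel

section Step

variable {E H : Type*} [NormedAddCommGroup E] [InnerProductSpace ℝ E]
  [NormedAddCommGroup H] [InnerProductSpace ℝ H]

/-- One AdaVSPAG iteration from `(x, y)` to `(x', y')` with gradient estimators `w`, `v` and
adaptive matrices `A`, `B`. The point `xbar`, at which the gradient mapping `(x - xbar) / γ` is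
evaluated, results from the same proximal step along the exact gradient `F' x`. The update
`y' = y - lam B⁻¹ v` is written without the inverse. -/
structure IsAdaVSPAGStep (F' : E → E) (h : E → ℝ) (ρ ρu γ lam : ℝ) (A : E →ₗ[ℝ] E)
    (B : H →L[ℝ] H) (w x x' xbar : E) (v y y' : H) : Prop where
  upper_coercive : IsSymmCoercive A ρ
  lower_coercive : IsSymmCoercive (B : H →ₗ[ℝ] H) ρ
  lower_le : ∀ z, ⟪B z, z⟫ ≤ ρu * ‖z‖ ^ 2
  prox : IsProxStep A h γ w x x'
  exact_prox : IsProxStep A h γ (F' x) x xbar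
  lower_update : B (y - y') = lam • v

/-- The Lyapunov function `Φ(x) + g(x, y) - G(x)` of AdaVSPAG, with `Φ = F + h`. -/
def lyapunov (F h : E → ℝ) (g : E → H → ℝ) (G : E → ℝ) (x : E) (y : H) : ℝ :=
  F x + h x + (g x y - G x)

lemma IsAdaVSPAGStep.lyapunov_decrease [CompleteSpace E] [CompleteSpace H]
    {μ L LG LF Lhat ρ ρu γ lam : ℝ} {F h : E → ℝ} {F' : E → E} {g : E → H → ℝ}
    {gx : E → H → E} {gy : E → H → H} {G : E → ℝ} {ystar : E → H} {A : E →ₗ[ℝ] E}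
    {B : H →L[ℝ] H} {w x x' xbar : E} {v y y' : H}
    (hstep : IsAdaVSPAGStep F' h ρ ρu γ lam A B w x x' xbar v y y')
    (hs : AdmissibleStepSizes μ L LG LF Lhat ρ ρu γ lam)
    (hg : IsPLLowerLevel μ L LG g gx gy G ystar) (hF : IsLSmooth F F' LF)
    (hconv : ConvexOn ℝ Set.univ h) :
    3 * γ * ρ / 32 * ‖γ⁻¹ • (x - xbar)‖ ^ 2
        + displacementWeight L Lhat ρ γ lam * (‖x' - x‖ ^ 2 + ‖y' - y‖ ^ 2)
        + 4 * Lhat ^ 2 / μ * (γ / ρ) * (g x y - G x)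
        - γ / ρ * ‖w - F' x‖ ^ 2 - lam / ρ * ‖v - gy x y‖ ^ 2
      ≤ lyapunov F h g G x y - lyapunov F h g G x' y' := by
  have hγ := hs.gamma_pos
  have hcomposite := hstep.prox.composite_decrease hstep.exact_prox hstep.upper_coercive hconv hF
    hγ hs.rho_pos hs.upper_le
  have hgap := hg.gap_decrease hs hstep.lower_coercive hstep.lower_le x x' hstep.lower_update
  have hmapping : 3 * γ * ρ / 32 * ‖γ⁻¹ • (x - xbar)‖ ^ 2 = 3 / 32 * (ρ / γ) * ‖xbar - x‖ ^ 2 := by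
    rw [norm_smul, Real.norm_of_nonneg (by positivity), norm_sub_rev]
    field_simp
  rw [hmapping, lyapunov, lyapunov]
  linarith

end Step

section Epochs

-- An index `i` lies in the window `[q⌊t/q⌋, t)` of at most `q` times `t`.
lemma sum_sum_Ico_epoch_le {q : ℕ} (hq : 0 < q) (T : ℕ) {D : ℕ → ℝ} (hD : ∀ i, 0 ≤ D i) :
    ∑ t ∈ Finset.range T, ∑ i ∈ Finset.Ico (q * (t / q)) t, D i
      ≤ q * ∑ t ∈ Finset.range T, D t := by
  have hcard (i : ℕ) : ((Finset.range T).filter fun t => q * (t / q) ≤ i ∧ i < t).card ≤ q := by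
    refine (Finset.card_le_card (t := Finset.Ioc i (i + q)) fun t ht => ?_).trans_eq (by simp)
    simp only [Finset.mem_filter, Finset.mem_range, Finset.mem_Ioc] at ht ⊢
    have hmod := Nat.mod_lt t hq
    have hdiv := Nat.div_add_mod t q
    omega
  calc ∑ t ∈ Finset.range T, ∑ i ∈ Finset.Ico (q * (t / q)) t, D i
      = ∑ i ∈ Finset.range T,
          ∑ _t ∈ (Finset.range T).filter fun t => q * (t / q) ≤ i ∧ i < t, D i := by
        refine Finset.sum_comm' fun t i => ?_
        simp only [Finset.mem_Ico, Finset.mem_filter, Finset.mem_range]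
        omega
    _ ≤ ∑ i ∈ Finset.range T, q * D i := by
        refine Finset.sum_le_sum fun i _ => ?_
        rw [Finset.sum_const, nsmul_eq_mul]
        exact mul_le_mul_of_nonneg_right (mod_cast hcard i) (hD i)
    _ = q * ∑ t ∈ Finset.range T, D t := (Finset.mul_sum _ _ _).symm

lemma sum_le_of_epoch_bound {q : ℕ} (hq : 0 < q) (T : ℕ) {D U R : ℕ → ℝ} {α : ℝ} (hα : 0 ≤ α)
    (hD : ∀ i, 0 ≤ D i) (hU : ∀ t, U t ≤ α / q * ∑ i ∈ Finset.Ico (q * (t / q)) t, D i + R t) :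
    ∑ t ∈ Finset.range T, U t
      ≤ α * ∑ t ∈ Finset.range T, D t + ∑ t ∈ Finset.range T, R t := by
  have hqR : (0 : ℝ) < q := mod_cast hq
  calc ∑ t ∈ Finset.range T, U t
      ≤ ∑ t ∈ Finset.range T, (α / q * ∑ i ∈ Finset.Ico (q * (t / q)) t, D i + R t) :=
        Finset.sum_le_sum fun t _ => hU t
    _ = α / q * ∑ t ∈ Finset.range T, ∑ i ∈ Finset.Ico (q * (t / q)) t, D i
          + ∑ t ∈ Finset.range T, R t := by rw [Finset.sum_add_distrib, Finset.mul_sum]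
    _ ≤ α / q * (q * ∑ t ∈ Finset.range T, D t) + ∑ t ∈ Finset.range T, R t := by
        gcongr
        exact sum_sum_Ico_epoch_le hq T hD
    _ = α * ∑ t ∈ Finset.range T, D t + ∑ t ∈ Finset.range T, R t := by
        rw [← mul_assoc, div_mul_cancel₀ α hqR.ne']

end Epochs

section Expectation

variable {Ω : Type*} [MeasurableSpace Ω] {P : Measure Ω}

-- The potential `Ψ t` need not be integrable for `0 < t`, so the sum is telescoped pathwise before
-- it is integrated.
lemma sum_integral_le_of_le_sub [IsProbabilityMeasure P] {ξ Ψ : ℕ → Ω → ℝ} {K m : ℝ} (T : ℕ)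
    (hξ : ∀ t, Integrable (ξ t) P) (hdecrease : ∀ t ω, ξ t ω ≤ Ψ t ω - Ψ (t + 1) ω)
    (hK : ∀ ω, Ψ 0 ω ≤ K) (hm : ∀ ω, m ≤ Ψ T ω) :
    ∑ t ∈ Finset.range T, ∫ ω, ξ t ω ∂P ≤ K - m := by
  have htelescope (ω : Ω) : ∑ t ∈ Finset.range T, ξ t ω ≤ K - m := by
    calc ∑ t ∈ Finset.range T, ξ t ω ≤ ∑ t ∈ Finset.range T, (Ψ t ω - Ψ (t + 1) ω) :=
          Finset.sum_le_sum fun t _ => hdecrease t ω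
      _ = Ψ 0 ω - Ψ T ω := Finset.sum_range_sub' (Ψ · ω) T
      _ ≤ K - m := sub_le_sub (hK ω) (hm ω)
  rw [← integral_finsetSum _ fun t _ => hξ t]
  calc ∫ ω, ∑ t ∈ Finset.range T, ξ t ω ∂P ≤ ∫ _, (K - m) ∂P :=
        integral_mono (integrable_finsetSum _ fun t _ => hξ t) (integrable_const _) htelescope
    _ = K - m := by simp

lemma integral_add_add_sub_sub {f₁ f₂ f₃ f₄ f₅ : Ω → ℝ} (h₁ : Integrable f₁ P)
    (h₂ : Integrable f₂ P) (h₃ : Integrable f₃ P) (h₄ : Integrable f₄ P) (h₅ : Integrable f₅ P) :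
    ∫ ω, (f₁ ω + f₂ ω + f₃ ω - f₄ ω - f₅ ω) ∂P
      = ∫ ω, f₁ ω ∂P + ∫ ω, f₂ ω ∂P + ∫ ω, f₃ ω ∂P - ∫ ω, f₄ ω ∂P - ∫ ω, f₅ ω ∂P := by
  rw [integral_sub (by fun_prop) h₅, integral_sub (by fun_prop) h₄, integral_add (by fun_prop) h₃,
    integral_add h₁ h₂]

end Expectation

section Convergence

variable {E H Ω : Type*} [NormedAddCommGroup E] [InnerProductSpace ℝ E] [CompleteSpace E]
  [NormedAddCommGroup H] [InnerProductSpace ℝ H] [CompleteSpace H] [MeasurableSpace Ω]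
  {P : Measure Ω} {μ L LG LF Lhat ρ ρu γ lam Φstar : ℝ}
  {g : E → H → ℝ} {gx : E → H → E} {gy : E → H → H} {G : E → ℝ} {ystar : E → H}
  {F : E → ℝ} {F' : E → E} {h : E → ℝ} {x w xbar : ℕ → Ω → E} {y v : ℕ → Ω → H}
  {A : ℕ → Ω → E →ₗ[ℝ] E} {B : ℕ → Ω → H →L[ℝ] H} {x0 : E} {y0 : H}

lemma sum_expected_decrease_le [IsProbabilityMeasure P]
    (hs : AdmissibleStepSizes μ L LG LF Lhat ρ ρu γ lam)
    (hg : IsPLLowerLevel μ L LG g gx gy G ystar) (hF : IsLSmooth F F' LF)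
    (hconv : ConvexOn ℝ Set.univ h) (hΦstar : ∀ z, Φstar ≤ F z + h z)
    (hx0 : ∀ ω, x 0 ω = x0) (hy0 : ∀ ω, y 0 ω = y0)
    (hstep : ∀ t ω, IsAdaVSPAGStep F' h ρ ρu γ lam (A t ω) (B t ω) (w t ω) (x t ω)
      (x (t + 1) ω) (xbar t ω) (v t ω) (y t ω) (y (t + 1) ω))
    (hintΔ : ∀ t, Integrable
      (fun ω => ‖x (t + 1) ω - x t ω‖ ^ 2 + ‖y (t + 1) ω - y t ω‖ ^ 2) P)
    (hintg : ∀ t, Integrable (fun ω => g (x t ω) (y t ω) - G (x t ω)) P)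
    (hintv : ∀ t, Integrable (fun ω => ‖v t ω - gy (x t ω) (y t ω)‖ ^ 2) P)
    (hintw : ∀ t, Integrable (fun ω => ‖w t ω - F' (x t ω)‖ ^ 2) P)
    (hintG : ∀ t, Integrable (fun ω => ‖γ⁻¹ • (x t ω - xbar t ω)‖ ^ 2) P) (T : ℕ) :
    ∑ t ∈ Finset.range T,
        (3 * γ * ρ / 32 * (∫ ω, ‖γ⁻¹ • (x t ω - xbar t ω)‖ ^ 2 ∂P)
          + displacementWeight L Lhat ρ γ lam
            * (∫ ω, (‖x (t + 1) ω - x t ω‖ ^ 2 + ‖y (t + 1) ω - y t ω‖ ^ 2) ∂P)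
          + 4 * Lhat ^ 2 / μ * (γ / ρ) * (∫ ω, (g (x t ω) (y t ω) - G (x t ω)) ∂P)
          - γ / ρ * (∫ ω, ‖w t ω - F' (x t ω)‖ ^ 2 ∂P)
          - lam / ρ * (∫ ω, ‖v t ω - gy (x t ω) (y t ω)‖ ^ 2 ∂P))
      ≤ lyapunov F h g G x0 y0 - Φstar := by
  have hinitial (ω : Ω) : lyapunov F h g G (x 0 ω) (y 0 ω) ≤ lyapunov F h g G x0 y0 := by
    rw [hx0, hy0]
  have hbounded (ω : Ω) : Φstar ≤ lyapunov F h g G (x T ω) (y T ω) :=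
    (hΦstar _).trans (le_add_of_nonneg_right (hg.gap_nonneg hs.mu_pos.le _ _))
  refine le_of_eq_of_le (Finset.sum_congr rfl fun t _ => ?_)
    (sum_integral_le_of_le_sub T
      (fun t => (((((hintG t).const_mul _).add ((hintΔ t).const_mul _)).add
        ((hintg t).const_mul _)).sub ((hintw t).const_mul _)).sub ((hintv t).const_mul _))
      (fun t ω => (hstep t ω).lyapunov_decrease hs hg hF hconv) hinitial hbounded)
  simp only [← integral_const_mul]
  exact (integral_add_add_sub_sub ((hintG t).const_mul _) ((hintΔ t).const_mul _)
    ((hintg t).const_mul _) ((hintw t).const_mul _) ((hintv t).const_mul _)).symm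

lemma mul_sum_le_of_epoch_bounds {q : ℕ} (hq : 0 < q) {T : ℕ} {Q D Θ U V : ℕ → ℝ}
    {a K εv εw : ℝ} (hγ : 0 ≤ γ) (hρ : 0 ≤ ρ) (hlam : 0 ≤ lam) (hD : ∀ t, 0 ≤ D t)
    (hdecrease : ∑ t ∈ Finset.range T, (a * Q t + displacementWeight L Lhat ρ γ lam * D t
      + 4 * Lhat ^ 2 / μ * (γ / ρ) * Θ t - γ / ρ * U t - lam / ρ * V t) ≤ K)
    (hV : ∀ t, V t ≤ 2 * L ^ 2 / q * ∑ i ∈ Finset.Ico (q * (t / q)) t, D i + εv)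
    (hU : ∀ t, U t ≤ 4 * Lhat ^ 2 / q * ∑ i ∈ Finset.Ico (q * (t / q)) t, D i
      + 4 * Lhat ^ 2 / μ * Θ t + εw) :
    a * ∑ t ∈ Finset.range T, Q t ≤ K + T * (γ / ρ * εw + lam / ρ * εv) := by
  have hsumV := sum_le_of_epoch_bound hq T (by positivity) hD hV
  have hsumU := sum_le_of_epoch_bound hq T (by positivity) hD
    fun t => (hU t).trans_eq (add_assoc _ _ _)
  have hscaledV := mul_le_mul_of_nonneg_left hsumV (div_nonneg hlam hρ)
  have hscaledU := mul_le_mul_of_nonneg_left hsumU (div_nonneg hγ hρ)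
  simp only [Finset.sum_add_distrib, Finset.sum_sub_distrib, ← Finset.mul_sum, Finset.sum_const,
    Finset.card_range, nsmul_eq_mul, displacementWeight] at hdecrease hscaledV hscaledU
  linarith

theorem stmt_19_general [IsProbabilityMeasure P] {T q : ℕ} {εv εw : ℝ} (hT : 0 < T) (hq : 0 < q)
    (hs : AdmissibleStepSizes μ L LG LF Lhat ρ ρu γ lam)
    (hg : IsPLLowerLevel μ L LG g gx gy G ystar) (hF : IsLSmooth F F' LF)
    (hconv : ConvexOn ℝ Set.univ h) (hΦstar : ∀ z, Φstar ≤ F z + h z)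
    (hx0 : ∀ ω, x 0 ω = x0) (hy0 : ∀ ω, y 0 ω = y0)
    (hstep : ∀ t ω, IsAdaVSPAGStep F' h ρ ρu γ lam (A t ω) (B t ω) (w t ω) (x t ω)
      (x (t + 1) ω) (xbar t ω) (v t ω) (y t ω) (y (t + 1) ω))
    (hintΔ : ∀ t, Integrable
      (fun ω => ‖x (t + 1) ω - x t ω‖ ^ 2 + ‖y (t + 1) ω - y t ω‖ ^ 2) P)
    (hintg : ∀ t, Integrable (fun ω => g (x t ω) (y t ω) - G (x t ω)) P)
    (hintv : ∀ t, Integrable (fun ω => ‖v t ω - gy (x t ω) (y t ω)‖ ^ 2) P)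
    (hintw : ∀ t, Integrable (fun ω => ‖w t ω - F' (x t ω)‖ ^ 2) P)
    (hintG : ∀ t, Integrable (fun ω => ‖γ⁻¹ • (x t ω - xbar t ω)‖ ^ 2) P)
    (hv : ∀ t, ∫ ω, ‖v t ω - gy (x t ω) (y t ω)‖ ^ 2 ∂P
      ≤ 2 * L ^ 2 / q * ∑ i ∈ Finset.Ico (q * (t / q)) t,
          (∫ ω, (‖x (i + 1) ω - x i ω‖ ^ 2 + ‖y (i + 1) ω - y i ω‖ ^ 2) ∂P) + εv)
    (hw : ∀ t, ∫ ω, ‖w t ω - F' (x t ω)‖ ^ 2 ∂P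
      ≤ 4 * Lhat ^ 2 / q * ∑ i ∈ Finset.Ico (q * (t / q)) t,
          (∫ ω, (‖x (i + 1) ω - x i ω‖ ^ 2 + ‖y (i + 1) ω - y i ω‖ ^ 2) ∂P)
        + 4 * Lhat ^ 2 / μ * (∫ ω, (g (x t ω) (y t ω) - G (x t ω)) ∂P) + εw) :
    1 / (T : ℝ) * ∑ t ∈ Finset.range T, (∫ ω, ‖γ⁻¹ • (x t ω - xbar t ω)‖ ^ 2 ∂P)
      ≤ 32 * (F x0 + h x0 - Φstar + (g x0 y0 - G x0)) / (3 * T * γ * ρ)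
        + 32 * εw / (3 * ρ ^ 2) + 32 * lam * εv / (3 * ρ ^ 2 * γ) := by
  have hγ := hs.gamma_pos
  have hρ := hs.rho_pos
  have hsum := mul_sum_le_of_epoch_bounds hq hγ.le hρ.le hs.lam_pos.le
    (fun t => integral_nonneg fun ω => by positivity)
    (sum_expected_decrease_le hs hg hF hconv hΦstar hx0 hy0 hstep hintΔ hintg hintv hintw hintG T)
    hv hw
  refine le_of_mul_le_mul_left ?_ (by positivity : 0 < 3 * γ * ρ / 32 * T)
  calc 3 * γ * ρ / 32 * T
        * (1 / (T : ℝ) * ∑ t ∈ Finset.range T, ∫ ω, ‖γ⁻¹ • (x t ω - xbar t ω)‖ ^ 2 ∂P)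
      = 3 * γ * ρ / 32 * ∑ t ∈ Finset.range T, ∫ ω, ‖γ⁻¹ • (x t ω - xbar t ω)‖ ^ 2 ∂P := by
        field_simp
    _ ≤ lyapunov F h g G x0 y0 - Φstar + T * (γ / ρ * εw + lam / ρ * εv) := hsum
    _ = 3 * γ * ρ / 32 * T
        * (32 * (F x0 + h x0 - Φstar + (g x0 y0 - G x0)) / (3 * T * γ * ρ)
          + 32 * εw / (3 * ρ ^ 2) + 32 * lam * εv / (3 * ρ ^ 2 * γ)) := by
        rw [lyapunov]
        field_simp
        ring

end Convergence

/-- (Theorem 3 of the paper.) Convergence of AdaVSPAG: under the bilevel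
smoothness/PL/quadratic-growth assumptions, the adaptive mirror-descent updates with
variance-reduced SARAH/SPIDER estimators `w_t` of `∇F(x_t)` and `v_t` of `∇_y g(x_t,y_t)`
satisfying the epoch-wise mean-square error bounds (Lemmas B2/B3), batch size `b = q`,
epoch starts `s_t = q⌊t/q⌋`, the stated step-size restrictions, and `Φ = F + h` bounded
below by `Φ*`, the averaged expected squared gradient mapping satisfies
`(1/T) Σ_{t=0}^{T−1} E‖𝒢(x_t,∇F(x_t),γ)‖² ≤ 32(Φ(x_0) − Φ* + g(x_0,y_0) − G(x_0))/(3Tγρ)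
 + 38 L̆² σ²/(3ρ² n) + 32 λ σ²/(3 ρ² γ n)`. -/
theorem stmt_19 {d p : ℕ} {Ω : Type*} [mΩ : MeasurableSpace Ω]
    (μP : Measure Ω) [IsProbabilityMeasure μP]
    (μ Lg LG LF Lhat Lbrev σ ρ ρu γ lam Φstar : ℝ) (T n q : ℕ)
    (hT : 0 < T) (hn : 0 < n) (hq : 0 < q)
    (hμ : 0 < μ) (hμLg : μ ≤ Lg) (hLG : max Lg (Lg ^ 2 / (2 * μ)) ≤ LG)
    (hLhat : 0 < Lhat) (hLbrev : 0 < Lbrev) (hσ : 0 < σ)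
    (hρ : 0 < ρ) (hρ1 : ρ < 1) (hρu : 0 < ρu) (hρρu : 1 ≤ ρ * ρu)
    -- lower-level objective, its partial gradients and value function:
    (g : EuclideanSpace ℝ (Fin d) → EuclideanSpace ℝ (Fin p) → ℝ)
    (gx : EuclideanSpace ℝ (Fin d) → EuclideanSpace ℝ (Fin p) → EuclideanSpace ℝ (Fin d))
    (gy : EuclideanSpace ℝ (Fin d) → EuclideanSpace ℝ (Fin p) → EuclideanSpace ℝ (Fin p))
    (hgx : ∀ x y, HasGradientAt (fun x' => g x' y) (gx x y) x)
    (hgy : ∀ x y, HasGradientAt (fun y' => g x y') (gy x y) y)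
    (hgxlipy : ∀ x y₁ y₂, ‖gx x y₁ - gx x y₂‖ ≤ Lg * ‖y₁ - y₂‖)
    (hgxlipx : ∀ x₁ x₂ y, ‖gx x₁ y - gx x₂ y‖ ≤ Lg * ‖x₁ - x₂‖)
    (hgylipy : ∀ x y₁ y₂, ‖gy x y₁ - gy x y₂‖ ≤ Lg * ‖y₁ - y₂‖)
    (hgylipx : ∀ x₁ x₂ y, ‖gy x₁ y - gy x₂ y‖ ≤ Lg * ‖x₁ - x₂‖)
    (G : EuclideanSpace ℝ (Fin d) → ℝ)
    (ystar : EuclideanSpace ℝ (Fin d) → EuclideanSpace ℝ (Fin p))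
    (hGval : ∀ x, g x (ystar x) = G x) (hGlow : ∀ x y, G x ≤ g x y)
    (hPL : ∀ x y, ‖gy x y‖ ^ 2 ≥ 2 * μ * (g x y - G x))
    (hQG : ∀ x y, g x y - G x ≥ (μ / 2) * ‖y - ystar x‖ ^ 2)
    (hGgrad : ∀ x, HasGradientAt G (gx x (ystar x)) x)
    (hGlip : ∀ x₁ x₂, ‖gx x₁ (ystar x₁) - gx x₂ (ystar x₂)‖ ≤ LG * ‖x₁ - x₂‖)
    -- upper-level objective and regularizer, `Φ = F + h` bounded below by `Φ*`:
    (F : EuclideanSpace ℝ (Fin d) → ℝ)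
    (F' : EuclideanSpace ℝ (Fin d) → EuclideanSpace ℝ (Fin d))
    (hF : ∀ z, HasGradientAt F (F' z) z)
    (hFlip : ∀ z₁ z₂, ‖F' z₁ - F' z₂‖ ≤ LF * ‖z₁ - z₂‖)
    (h : EuclideanSpace ℝ (Fin d) → ℝ) (hconv : ConvexOn ℝ Set.univ h)
    (hΦstar : ∀ z, Φstar ≤ F z + h z)
    -- random iterates, estimators and adaptive matrices:
    (x : ℕ → Ω → EuclideanSpace ℝ (Fin d)) (y : ℕ → Ω → EuclideanSpace ℝ (Fin p))
    (w : ℕ → Ω → EuclideanSpace ℝ (Fin d)) (v : ℕ → Ω → EuclideanSpace ℝ (Fin p))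
    (A : ℕ → Ω → (EuclideanSpace ℝ (Fin d) →L[ℝ] EuclideanSpace ℝ (Fin d)))
    (B : ℕ → Ω → (EuclideanSpace ℝ (Fin p) →L[ℝ] EuclideanSpace ℝ (Fin p)))
    (hAsymm : ∀ t ω v' w', ⟪A t ω v', w'⟫ = ⟪v', A t ω w'⟫)
    (hApos : ∀ t ω v', ρ * ‖v'‖ ^ 2 ≤ ⟪A t ω v', v'⟫)
    (hBsymm : ∀ t ω v' w', ⟪B t ω v', w'⟫ = ⟪v', B t ω w'⟫)
    (hBl : ∀ t ω v', ρ * ‖v'‖ ^ 2 ≤ ⟪B t ω v', v'⟫)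
    (hBu : ∀ t ω v', ⟪B t ω v', v'⟫ ≤ ρu * ‖v'‖ ^ 2)
    -- deterministic initialization:
    (x0 : EuclideanSpace ℝ (Fin d)) (y0 : EuclideanSpace ℝ (Fin p))
    (hx0 : ∀ ω, x 0 ω = x0) (hy0 : ∀ ω, y 0 ω = y0)
    -- the AdaVSPAG updates:
    (hx : ∀ t ω z, ⟪w t ω, x (t + 1) ω⟫
        + (1 / (2 * γ)) * ⟪A t ω (x (t + 1) ω - x t ω), x (t + 1) ω - x t ω⟫
        + h (x (t + 1) ω)
      ≤ ⟪w t ω, z⟫ + (1 / (2 * γ)) * ⟪A t ω (z - x t ω), z - x t ω⟫ + h z)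
    (hy : ∀ t ω, B t ω (y t ω - y (t + 1) ω) = lam • v t ω)
    -- integrability of the relevant quantities:
    (hintΔ : ∀ t, Integrable (fun ω =>
      ‖x (t + 1) ω - x t ω‖ ^ 2 + ‖y (t + 1) ω - y t ω‖ ^ 2) μP)
    (hintg : ∀ t, Integrable (fun ω => g (x t ω) (y t ω) - G (x t ω)) μP)
    (hintv : ∀ t, Integrable (fun ω => ‖v t ω - gy (x t ω) (y t ω)‖ ^ 2) μP)
    (hintw : ∀ t, Integrable (fun ω => ‖w t ω - F' (x t ω)‖ ^ 2) μP)
    -- epoch-wise variance-reduction error bounds with `b = q` and epoch start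
    -- `s_t = q⌊t/q⌋` (Lemmas B2 and B3):
    (hv : ∀ t, ∫ ω, ‖v t ω - gy (x t ω) (y t ω)‖ ^ 2 ∂μP
      ≤ (2 * Lg ^ 2 / q) * ∑ i ∈ Finset.Ico (q * (t / q)) t,
          (∫ ω, (‖x (i + 1) ω - x i ω‖ ^ 2 + ‖y (i + 1) ω - y i ω‖ ^ 2) ∂μP)
        + σ ^ 2 / n)
    (hw : ∀ t, ∫ ω, ‖w t ω - F' (x t ω)‖ ^ 2 ∂μP
      ≤ (4 * Lhat ^ 2 / q) * ∑ i ∈ Finset.Ico (q * (t / q)) t,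
          (∫ ω, (‖x (i + 1) ω - x i ω‖ ^ 2 + ‖y (i + 1) ω - y i ω‖ ^ 2) ∂μP)
        + (4 * Lhat ^ 2 / μ) * (∫ ω, (g (x t ω) (y t ω) - G (x t ω)) ∂μP)
        + Lbrev ^ 2 * σ ^ 2 / n)
    -- step sizes:
    (hγ : 0 < γ) (hγ1 : γ ≤ 3 * ρ / (4 * LF))
    (hγ2 : γ ≤ 4 * ρ * μ ^ 2 * lam / (19 * Lhat ^ 2 * ρu))
    (hγ3 : γ ≤ ρ / (2 * Real.sqrt 38 * Lhat ^ 2))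
    (hγ4 : γ ≤ ρ / (38 * ρu * lam * Lhat ^ 2))
    (hγ5 : γ ≤ lam * ρ * ρu / 4)
    (hγ6 : γ ≤ lam * μ * ρ / (16 * LG * ρu))
    (hγ7 : γ ≤ μ * ρ / (16 * Lg ^ 2 * ρu))
    (hlam : 0 < lam) (hlam1 : lam ≤ 1 / (2 * Lg * ρu))
    (hlam2 : lam ≤ Real.sqrt ρ / (4 * Real.sqrt ρu * Lg))
    -- the exact-gradient proximal step defining the gradient mapping
    -- `𝒢(x_t,∇F(x_t),γ) = (x_t − x̄_{t+1})/γ`: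
    (xbar : ℕ → Ω → EuclideanSpace ℝ (Fin d))
    (hxbar : ∀ t ω z, ⟪F' (x t ω), xbar t ω⟫
        + (1 / (2 * γ)) * ⟪A t ω (xbar t ω - x t ω), xbar t ω - x t ω⟫ + h (xbar t ω)
      ≤ ⟪F' (x t ω), z⟫ + (1 / (2 * γ)) * ⟪A t ω (z - x t ω), z - x t ω⟫ + h z)
    (hintG : ∀ t, Integrable (fun ω => ‖γ⁻¹ • (x t ω - xbar t ω)‖ ^ 2) μP) :
    (1 / (T : ℝ)) * ∑ t ∈ Finset.range T, (∫ ω, ‖γ⁻¹ • (x t ω - xbar t ω)‖ ^ 2 ∂μP)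
      ≤ 32 * (F x0 + h x0 - Φstar + (g x0 y0 - G x0)) / (3 * T * γ * ρ)
        + 38 * Lbrev ^ 2 * σ ^ 2 / (3 * ρ ^ 2 * n)
        + 32 * lam * σ ^ 2 / (3 * ρ ^ 2 * γ * n) := by
  have hρu_one : 1 ≤ ρu := hρρu.trans (mul_le_of_le_one_left hρu.le hρ1.le)
  calc _ ≤ 32 * (F x0 + h x0 - Φstar + (g x0 y0 - G x0)) / (3 * T * γ * ρ)
        + 32 * (Lbrev ^ 2 * σ ^ 2 / n) / (3 * ρ ^ 2)
        + 32 * lam * (σ ^ 2 / n) / (3 * ρ ^ 2 * γ) :=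
      stmt_19_general hT hq
        ⟨hμ, hμLg, hLG, hρ, hρ1.le.trans hρu_one, hρρu, hγ, hγ1, hγ2, hγ6, hlam, hlam2⟩
        ⟨fun y => ⟨(hgx · y), (hgxlipx · · y)⟩, fun x => ⟨hgy x, hgylipy x⟩, hgxlipy, hGval, hPL,
          hQG, ⟨hGgrad, hGlip⟩⟩
        ⟨hF, hFlip⟩ hconv hΦstar hx0 hy0
        (fun t ω => ⟨⟨hAsymm t ω, hApos t ω⟩, ⟨hBsymm t ω, hBl t ω⟩, hBu t ω, hx t ω, hxbar t ω,
          hy t ω⟩)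
        hintΔ hintg hintv hintw hintG hv hw
    _ = 32 * (F x0 + h x0 - Φstar + (g x0 y0 - G x0)) / (3 * T * γ * ρ)
        + 32 * Lbrev ^ 2 * σ ^ 2 / (3 * ρ ^ 2 * n)
        + 32 * lam * σ ^ 2 / (3 * ρ ^ 2 * γ * n) := by ring
    _ ≤ _ := by gcongr; norm_num
end
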